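/- As the real variable x tends to 0, (1/8)·∑_{n=0}^∞ (−1)^n · 2^{−2(n+x)} · (1/2)_{n+x} (1/4)_{n+x} (3/4)_{n+x} / (1)_{n+x}³ · (20(n+x)+3) = 1/π − (3/2)π x² + 32 G x³ + O(x⁴), where G is Catalan's constant; in particular the coefficients of x⁰, x¹, x², x³ in the expansion are 1/π, 0, −(3/2)π, 32G respectively. -/

import Mathlib

/-- The Pochhammer symbol for real index: `(a)_t = Γ(a+t)/Γ(a)`. -/
noncomputable def pochG (a t : ℝ) : ℝ := Real.Gamma (a + t) / Real.Gamma a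

/-- Catalan's constant `G = ∑_{n≥0} (-1)^n/(2n+1)²`. -/
noncomputable def catalan' : ℝ := ∑' n : ℕ, (-1 : ℝ) ^ n / (2 * (n : ℝ) + 1) ^ 2

/-!
With `F(x, k) = 2x · wzFactor x · wzTerm x k`, the Wilf–Zeilberger relation
`F(x + 1, k) + F(x, k) = wzCompanion x k - wzCompanion x (k + 1)` telescopes over `k`, and
`wzCompanion x 0` is the summand of the shifted series. So for `x > 0` the series `S(x)` equals
`∑ₖ F(x, k)`. Dougall's bilateral sum, which is Parseval's identity for Cauchy's integral of
`(2 cos θ)^p cos (qθ)`, ties `∑ₖ wzTerm x k` to a dual series and gives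
`S(x) (1 + 2 sin² (πx)) cos (πx) = 1/π + x³ c(x)`, where `c(x)` is a factor tending to `4π` times
the difference of the two series. Their terms interlace, so this difference is continuous up to
`x = 0` although both series diverge there; with the Wallis integrals `Wₙ` its value at `0` is
`4/π ∑ (-1)^n Wₙ² = 4/π ∫₀^{π/2} a / sin a da = 8G/π`, whence `c(x) → 32G`.

This limit is taken from the right only. But `S` is analytic at `0`, so an error which is `o(x³)` on
one side is `O(x⁴)` on both.
-/

section

open Real Filter Topology MeasureTheory Asymptotics Set
open scoped ComplexConjugate

/-! ### Quotients of Gamma values -/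

theorem prod_range_add_natCast {a : ℝ} (ha : 0 < a) (n : ℕ) :
    ∏ j ∈ Finset.range n, (a + j) = Gamma (n + a) / Gamma a := by
  induction n with
  | zero => simp [(Gamma_pos_of_pos ha).ne']
  | succ n ih =>
    rw [Finset.prod_range_succ, ih, Nat.cast_succ, add_right_comm, Gamma_add_one (by positivity)]
    ring

theorem Gamma_natCast_add_isEquivalent {a : ℝ} (ha : 0 < a) :
    (fun n : ℕ ↦ Gamma (n + a)) ~[atTop] fun n ↦ n.factorial * (n : ℝ) ^ (a - 1) := by
  have hΓ := (Gamma_pos_of_pos ha).ne'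
  have hlim : Tendsto (fun n : ℕ ↦ (GammaSeq a n / Gamma a)⁻¹ * ((n : ℝ) / (n + a)))
      atTop (𝓝 1) := by
    simpa [hΓ] using (((GammaSeq_tendsto_Gamma a).div_const (Gamma a)).inv₀ (by simp [hΓ])).mul
      (tendsto_natCast_div_add_atTop a)
  refine isEquivalent_of_tendsto_one (hlim.congr' ?_)
  filter_upwards [eventually_gt_atTop 0] with n hn
  have hn : (0 : ℝ) < n := mod_cast hn
  rw [GammaSeq, prod_range_add_natCast ha, Nat.cast_succ, add_right_comm,
    Gamma_add_one (by positivity), Pi.div_apply, rpow_sub_one hn.ne']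
  have := (rpow_pos_of_pos hn a).ne'
  have : (n.factorial : ℝ) ≠ 0 := by positivity
  have : (n : ℝ) + a ≠ 0 := by positivity
  field_simp

theorem Gamma_mul_Gamma_le_of_add_eq_add {a b c d : ℝ} (ha : 0 < a) (hac : a ≤ c) (hcb : c ≤ b)
    (h : a + b = c + d) : Gamma c * Gamma d ≤ Gamma a * Gamma b := by
  rcases hac.eq_or_lt with rfl | hac
  · rw [add_left_cancel h]
  have hab : 0 < b - a := by linarith
  have hb : 0 < b := by linarith
  have hΓ {s : ℝ} (hs : a ≤ s) : 0 < Gamma s := Gamma_pos_of_pos (ha.trans_le hs)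
  set s := (b - c) / (b - a)
  set t := (c - a) / (b - a)
  have hst : s + t = 1 := by simp only [s, t]; field_simp; ring
  have hc : s * a + t * b = c := by simp only [s, t]; field_simp; ring
  have hd : t * a + s * b = d := by linear_combination (a + b) * hst - hc + h
  have hs : 0 ≤ s := div_nonneg (by linarith) hab.le
  have ht : 0 ≤ t := div_nonneg (by linarith) hab.le
  have hlogc := convexOn_log_Gamma.2 ha hb hs ht hst
  have hlogd := convexOn_log_Gamma.2 ha hb ht hs (by linarith)
  simp only [smul_eq_mul, hc, hd, Function.comp_apply] at hlogc hlogd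
  have hΓa := hΓ le_rfl
  have hΓb := hΓ (by linarith : a ≤ b)
  have hΓc := hΓ hac.le
  have hΓd := hΓ (by linarith : a ≤ d)
  rw [← log_le_log_iff (by positivity) (by positivity), log_mul hΓc.ne' hΓd.ne',
    log_mul hΓa.ne' hΓb.ne']
  linear_combination hlogc + hlogd + (log (Gamma a) + log (Gamma b)) * hst

theorem inv_Gamma_eq_mul_inv_Gamma_add_one (s : ℝ) : (Gamma s)⁻¹ = s * (Gamma (s + 1))⁻¹ := by
  rcases eq_or_ne s 0 with rfl | hs
  · simp
  · rw [Gamma_add_one hs]; field_simp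

theorem inv_Gamma_eq_sin_mul_Gamma_one_sub {s : ℝ} (hs : s < 1) :
    (Gamma s)⁻¹ = sin (π * s) / π * Gamma (1 - s) := by
  have hΓ := (Gamma_pos_of_pos (sub_pos.2 hs)).ne'
  rw [← inv_div, ← Gamma_mul_Gamma_one_sub, mul_inv, inv_mul_cancel_right₀ hΓ]

theorem inv_Gamma_sub_natCast {s : ℝ} (hs : s < 1) (k : ℕ) :
    (Gamma (s - k))⁻¹ = (-1) ^ k * (sin (π * s) / π) * Gamma (k + (1 - s)) := by
  rw [inv_Gamma_eq_sin_mul_Gamma_one_sub (by linarith [k.cast_nonneg (α := ℝ)]), mul_sub,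
    mul_comm π k, sin_sub_nat_mul_pi, sub_sub_eq_add_sub, add_comm 1 (k : ℝ), add_sub_assoc]
  ring

/-- The quotient `Γ(n+a)Γ(n+b)/(Γ(n+c)Γ(n+d))`: the general term of a hypergeometric series,
up to a constant factor. -/
noncomputable def gammaQuotient (a b c d : ℝ) (n : ℕ) : ℝ :=
  Gamma (n + a) * Gamma (n + b) / (Gamma (n + c) * Gamma (n + d))

section gammaQuotient

variable {a b c d : ℝ} (ha : 0 < a) (hb : 0 < b) (hc : 0 < c) (hd : 0 < d)
include ha hb hc hd

theorem gammaQuotient_pos (n : ℕ) : 0 < gammaQuotient a b c d n := by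
  have hΓ {s : ℝ} (hs : 0 < s) : 0 < Gamma (n + s) := Gamma_pos_of_pos (by positivity)
  exact div_pos (mul_pos (hΓ ha) (hΓ hb)) (mul_pos (hΓ hc) (hΓ hd))

theorem gammaQuotient_succ (n : ℕ) :
    gammaQuotient a b c d (n + 1) =
      (n + a) * (n + b) / ((n + c) * (n + d)) * gammaQuotient a b c d n := by
  have hΓ {s : ℝ} (hs : 0 < s) : Gamma ((n + 1 : ℕ) + s) = (n + s) * Gamma (n + s) := by
    rw [Nat.cast_succ, add_right_comm, Gamma_add_one (by positivity)]
  rw [gammaQuotient, gammaQuotient, hΓ ha, hΓ hb, hΓ hc, hΓ hd, div_mul_div_comm]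
  ring

theorem gammaQuotient_isEquivalent :
    gammaQuotient a b c d ~[atTop] fun n ↦ (n : ℝ) ^ (a + b - c - d) := by
  refine (((Gamma_natCast_add_isEquivalent ha).mul (Gamma_natCast_add_isEquivalent hb)).div
    ((Gamma_natCast_add_isEquivalent hc).mul (Gamma_natCast_add_isEquivalent hd))).congr_right ?_
  filter_upwards [eventually_gt_atTop 0] with n hn
  have hn : (0 : ℝ) < n := mod_cast hn
  simp only [Pi.div_apply, Pi.mul_apply, rpow_sub hn, rpow_add hn, rpow_one]
  have := n.factorial_pos
  have hpow (s : ℝ) := rpow_pos_of_pos hn s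
  have := hpow a
  have := hpow b
  have := hpow c
  have := hpow d
  field_simp

theorem summable_gammaQuotient (h : a + b + 1 < c + d) : Summable (gammaQuotient a b c d) :=
  (gammaQuotient_isEquivalent ha hb hc hd).summable_iff_nat.2
    (summable_nat_rpow.2 (by linarith))

theorem tendsto_natCast_mul_gammaQuotient (h : a + b + 1 < c + d) :
    Tendsto (fun n : ℕ ↦ n * gammaQuotient a b c d n) atTop (𝓝 0) := by
  have hdecay : Tendsto (fun n : ℕ ↦ (n : ℝ) ^ (-(c + d - a - b - 1))) atTop (𝓝 0) :=
    (tendsto_rpow_neg_atTop (by linarith)).comp tendsto_natCast_atTop_atTop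
  refine (IsEquivalent.refl.mul (gammaQuotient_isEquivalent ha hb hc hd)).symm.tendsto_nhds
    (hdecay.congr' ?_)
  filter_upwards [eventually_gt_atTop 0] with n hn
  have hn : (0 : ℝ) < n := mod_cast hn
  rw [Pi.mul_apply, ← rpow_one_add' hn.le (by linarith)]
  congr 1
  ring

end gammaQuotient

theorem tendsto_gammaQuotient_nhds {α : Type*} {l : Filter α} {a b c d : α → ℝ} {a₀ b₀ c₀ d₀ : ℝ}
    (ha : Tendsto a l (𝓝 a₀)) (hb : Tendsto b l (𝓝 b₀)) (hc : Tendsto c l (𝓝 c₀))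
    (hd : Tendsto d l (𝓝 d₀)) (ha₀ : 0 < a₀) (hb₀ : 0 < b₀) (hc₀ : 0 < c₀) (hd₀ : 0 < d₀) (n : ℕ) :
    Tendsto (fun x ↦ gammaQuotient (a x) (b x) (c x) (d x) n) l
      (𝓝 (gammaQuotient a₀ b₀ c₀ d₀ n)) := by
  have hΓ {s : α → ℝ} {s₀ : ℝ} (hs : Tendsto s l (𝓝 s₀)) (hs₀ : 0 < s₀) :
      Tendsto (fun x ↦ Gamma (n + s x)) l (𝓝 (Gamma (n + s₀))) :=
    (differentiableOn_Gamma_Ioi.differentiableAt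
      (Ioi_mem_nhds (by positivity))).continuousAt.tendsto.comp (hs.const_add _)
  have hne {s : ℝ} (hs : 0 < s) : Gamma (n + s) ≠ 0 := (Gamma_pos_of_pos (by positivity)).ne'
  exact ((hΓ ha ha₀).mul (hΓ hb hb₀)).div ((hΓ hc hc₀).mul (hΓ hd hd₀))
    (mul_ne_zero (hne hc₀) (hne hd₀))

theorem gammaQuotient_succ_eq_shift (a b c d : ℝ) (n : ℕ) :
    gammaQuotient a b c d (n + 1) = gammaQuotient (a + 1) (b + 1) (c + 1) (d + 1) n := by
  simp only [gammaQuotient, Nat.cast_succ, add_right_comm, add_assoc]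

theorem gammaQuotient_le_gammaQuotient {a b c d a' b' c' d' : ℝ} (ha' : 0 < a') (hb' : 0 < b')
    (hc' : 0 < c') (hd' : 0 < d') (haa' : a' ≤ a) (hac : a ≤ c) (hbb' : b' ≤ b) (hbd : b ≤ d)
    (h : a' + c = a + c') (h' : b' + d = b + d') (n : ℕ) :
    gammaQuotient a b c d n ≤ gammaQuotient a' b' c' d' n := by
  have hΓ {s : ℝ} (hs : 0 < s) : 0 < Gamma (n + s) := Gamma_pos_of_pos (by positivity)
  have hle {p q r s : ℝ} (hp : 0 < p) (hpr : p ≤ r) (hrq : r ≤ q) (h : p + q = r + s) :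
      Gamma (n + r) * Gamma (n + s) ≤ Gamma (n + p) * Gamma (n + q) :=
    Gamma_mul_Gamma_le_of_add_eq_add (by positivity) (by linarith) (by linarith) (by linarith)
  have hb := hΓ (hb'.trans_le hbb')
  have hd := hΓ ((hb'.trans_le hbb').trans_le hbd)
  have hc := hΓ ((ha'.trans_le haa').trans_le hac)
  have := hΓ ha'
  have := hΓ hc'
  have := hΓ hd'
  rw [gammaQuotient, gammaQuotient, div_le_div_iff₀ (by positivity) (by positivity)]
  linarith [mul_le_mul (hle ha' haa' hac h) (hle hb' hbb' hbd h') (by positivity) (by positivity)]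

/-! ### A Wilf–Zeilberger pair -/

theorem pochG_zero {a : ℝ} (ha : 0 < a) : pochG a 0 = 1 := by
  rw [pochG, add_zero, div_self (Gamma_pos_of_pos ha).ne']

theorem pochG_pos {a t : ℝ} (ha : 0 < a) (hat : 0 < a + t) : 0 < pochG a t :=
  div_pos (Gamma_pos_of_pos hat) (Gamma_pos_of_pos ha)

theorem pochG_add_one {a t : ℝ} (h : a + t ≠ 0) : pochG a (t + 1) = (a + t) * pochG a t := by
  rw [pochG, pochG, ← add_assoc, Gamma_add_one h, mul_div_assoc]

theorem pochG_mul_pochG_add_half (a t : ℝ) :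
    pochG a t * pochG (a + 1 / 2) t = 2 ^ (-(2 : ℝ) * t) * pochG (2 * a) (2 * t) := by
  have hpow : (2 : ℝ) ^ (1 - 2 * (a + t)) = 2 ^ (1 - 2 * a) * 2 ^ (-(2 : ℝ) * t) := by
    rw [← rpow_add two_pos]
    ring_nf
  have := (rpow_pos_of_pos two_pos (1 - 2 * a)).ne'
  have := sqrt_ne_zero'.2 pi_pos
  rw [pochG, pochG, add_right_comm, div_mul_div_comm, Gamma_mul_Gamma_add_half,
    Gamma_mul_Gamma_add_half, pochG, hpow, mul_add]
  field_simp

/-- The weight `2^(-2t) (1/2)_t (1/4)_t (3/4)_t / (1)_t³` of the series at argument `t`. -/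
noncomputable def hypWeight (t : ℝ) : ℝ :=
  2 ^ (-(2 : ℝ) * t) * (pochG (1 / 2) t * pochG (1 / 4) t * pochG (3 / 4) t / pochG 1 t ^ 3)

theorem hypWeight_eq {t : ℝ} (ht : -(1 / 2) < t) :
    hypWeight t =
      pochG (1 / 2) t ^ 3 * pochG (1 / 2) (2 * t) / (pochG 1 t * pochG 1 (2 * t) ^ 2) := by
  have hquarter := pochG_mul_pochG_add_half (1 / 4) t
  have hhalf := pochG_mul_pochG_add_half (1 / 2) t
  norm_num only at hquarter hhalf
  have hpos : 0 < pochG 1 t := pochG_pos one_pos (by linarith)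
  have hpos₂ : 0 < pochG 1 (2 * t) := pochG_pos one_pos (by linarith)
  rw [← div_eq_iff hpos₂.ne'] at hhalf
  rw [hypWeight, mul_assoc (pochG (1 / 2) t), hquarter, ← hhalf]
  field_simp

/-- The general term of the auxiliary series of the Wilf–Zeilberger pair. -/
noncomputable def wzTerm (x : ℝ) : ℕ → ℝ :=
  gammaQuotient (1 / 2) (1 / 2 + x) (1 + 2 * x) (1 + x)

/-- The factor normalising the auxiliary series: `2x · wzFactor x · wzTerm x k` is the first member
of the Wilf–Zeilberger pair. -/
noncomputable def wzFactor (x : ℝ) : ℝ :=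
  pochG (1 / 2) (2 * x) * pochG (1 / 2) x ^ 2 / (π * pochG 1 (2 * x))

/-- The second member of the Wilf–Zeilberger pair. -/
noncomputable def wzCompanion (x : ℝ) (k : ℕ) : ℝ :=
  wzFactor x * wzTerm x k *
    ((8 * k + 16 * x + 2 + (4 * x + 1) * (2 * x + 1) / (k + (1 + 2 * x))) / 8)

theorem wzFactor_zero : wzFactor 0 = 1 / π := by
  simp [wzFactor, pochG_zero]

theorem wzFactor_mul_wzTerm_zero {x : ℝ} (hx : 0 < x) :
    wzFactor x * wzTerm x 0 = hypWeight x := by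
  have hΓ := (Gamma_pos_of_pos (show 0 < 1 + x by linarith)).ne'
  have hΓ₂ := (Gamma_pos_of_pos (show 0 < 1 + 2 * x by linarith)).ne'
  have hπ := sqrt_ne_zero'.2 pi_pos
  rw [hypWeight_eq (by linarith), wzFactor, wzTerm, gammaQuotient]
  simp only [pochG, Nat.cast_zero, zero_add, Gamma_one, Gamma_one_half_eq]
  nth_rw 3 [← mul_self_sqrt pi_pos.le]
  field_simp

section WilfZeilberger

variable {x : ℝ} (hx : 0 < x)
include hx

theorem wzFactor_pos : 0 < wzFactor x := by
  have h₁ : 0 < pochG (1 / 2) (2 * x) := pochG_pos (by norm_num) (by linarith)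
  have h₂ : 0 < pochG (1 / 2) x := pochG_pos (by norm_num) (by linarith)
  have h₃ : 0 < pochG 1 (2 * x) := pochG_pos one_pos (by linarith)
  rw [wzFactor]
  positivity

theorem wzTerm_pos (k : ℕ) : 0 < wzTerm x k :=
  gammaQuotient_pos (by norm_num) (by linarith) (by linarith) (by linarith) k

theorem summable_wzTerm : Summable (wzTerm x) :=
  summable_gammaQuotient (by norm_num) (by linarith) (by linarith) (by linarith) (by linarith)

theorem wzTerm_succ (k : ℕ) :
    wzTerm x (k + 1) =
      (k + 1 / 2) * (k + (1 / 2 + x)) / ((k + (1 + 2 * x)) * (k + (1 + x))) * wzTerm x k :=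
  gammaQuotient_succ (by norm_num) (by linarith) (by linarith) (by linarith) k

theorem wzTerm_add_one (k : ℕ) :
    wzTerm (x + 1) k =
      (k + (1 / 2 + x)) / ((k + (1 + 2 * x)) * (k + (2 + 2 * x)) * (k + (1 + x))) *
        wzTerm x k := by
  have hΓ {s : ℝ} (hs : 0 < s) : Gamma (k + (s + 1)) = (k + s) * Gamma (k + s) := by
    rw [← add_assoc, Gamma_add_one (by positivity)]
  simp only [wzTerm, gammaQuotient]
  rw [← add_assoc (1 / 2), hΓ (by linarith), ← add_assoc 1 x, hΓ (by linarith),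
    show 1 + 2 * (x + 1) = 1 + 2 * x + 1 + 1 by ring, hΓ (by linarith), hΓ (by linarith),
    div_mul_div_comm]
  congr 1 <;> ring_nf

theorem wzFactor_add_one :
    wzFactor (x + 1) =
      (1 / 2 + 2 * x) * (3 / 2 + 2 * x) * (1 / 2 + x) ^ 2 / ((1 + 2 * x) * (2 + 2 * x)) *
        wzFactor x := by
  have hshift (a : ℝ) (ha : 0 < a) :
      pochG a (2 * (x + 1)) = (a + 1 + 2 * x) * ((a + 2 * x) * pochG a (2 * x)) := by
    rw [show 2 * (x + 1) = 2 * x + 1 + 1 by ring, pochG_add_one (by linarith),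
      pochG_add_one (by linarith), add_right_comm a 1, add_assoc a (2 * x)]
  rw [wzFactor, wzFactor, hshift _ (by norm_num), hshift _ one_pos, pochG_add_one (by linarith),
    div_mul_div_comm]
  congr 1 <;> ring

theorem wzCompanion_sub_succ (k : ℕ) :
    wzCompanion x k - wzCompanion x (k + 1) =
      2 * (x + 1) * wzFactor (x + 1) * wzTerm (x + 1) k + 2 * x * wzFactor x * wzTerm x k := by
  have : 0 < k + 1 + (1 + 2 * x) := by positivity
  have : 0 < k + (1 + 2 * x) := by positivity
  have : 0 < k + (2 + 2 * x) := by positivity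
  have : 0 < k + (1 + x) := by positivity
  rw [wzCompanion, wzCompanion, wzFactor_add_one hx, wzTerm_add_one hx, wzTerm_succ hx]
  push_cast
  field_simp
  ring

theorem tendsto_wzCompanion : Tendsto (wzCompanion x) atTop (𝓝 0) := by
  have hlin : Tendsto (fun k : ℕ ↦ k * wzTerm x k) atTop (𝓝 0) :=
    tendsto_natCast_mul_gammaQuotient (by norm_num) (by linarith) (by linarith) (by linarith)
      (by linarith)
  have hterm := (summable_wzTerm hx).tendsto_atTop_zero
  have hdiv : Tendsto (fun k : ℕ ↦ wzTerm x k / (k + (1 + 2 * x))) atTop (𝓝 0) :=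
    hterm.div_atTop (tendsto_natCast_atTop_atTop.atTop_add tendsto_const_nhds)
  have := (((hlin.const_mul 8).add (hterm.const_mul (16 * x + 2))).add
    (hdiv.const_mul ((4 * x + 1) * (2 * x + 1)))).const_mul (wzFactor x / 8)
  simp only [mul_zero, add_zero] at this
  refine this.congr fun k ↦ ?_
  rw [wzCompanion]
  ring

theorem wzCompanion_zero : wzCompanion x 0 = 1 / 8 * (hypWeight x * (20 * x + 3)) := by
  have : 0 < 1 + 2 * x := by linarith
  rw [wzCompanion, wzFactor_mul_wzTerm_zero hx, Nat.cast_zero]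
  field_simp
  ring

end WilfZeilberger

/-- The sum `∑ₖ 2x · wzFactor x · wzTerm x k` of the first member of the Wilf–Zeilberger pair. -/
noncomputable def wzSum (x : ℝ) : ℝ :=
  2 * x * wzFactor x * ∑' k, wzTerm x k

theorem wzSum_nonneg {x : ℝ} (hx : 0 < x) : 0 ≤ wzSum x :=
  mul_nonneg (mul_nonneg (by linarith) (wzFactor_pos hx).le)
    (tsum_nonneg fun k ↦ (wzTerm_pos hx k).le)

theorem wzSum_add_one_add {x : ℝ} (hx : 0 < x) :
    wzSum (x + 1) + wzSum x = 1 / 8 * (hypWeight x * (20 * x + 3)) := by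
  have hsum := ((summable_wzTerm (add_pos hx one_pos)).hasSum.mul_left
    (2 * (x + 1) * wzFactor (x + 1))).add
    ((summable_wzTerm hx).hasSum.mul_left (2 * x * wzFactor x))
  simp only [← wzCompanion_sub_succ hx] at hsum
  have htel := (tendsto_wzCompanion hx).const_sub (wzCompanion x 0)
  rw [sub_zero] at htel
  rw [← wzCompanion_zero hx]
  refine tendsto_nhds_unique hsum.tendsto_sum_nat ?_
  simpa only [Finset.sum_range_sub'] using htel

theorem tsum_alternating_eq_of_succ_add {H g : ℕ → ℝ} (hH : ∀ n, 0 ≤ H n)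
    (hrec : ∀ n, H (n + 1) + H n = g n) (hg : Summable fun n ↦ (-1) ^ n * g n) :
    ∑' n, (-1) ^ n * g n = H 0 := by
  have hpartial (m : ℕ) : ∑ n ∈ Finset.range m, (-1) ^ n * g n = H 0 - (-1) ^ m * H m := by
    induction m with
    | zero => simp
    | succ m ih => rw [Finset.sum_range_succ, ih, ← hrec]; ring
  have hlim : Tendsto (fun m ↦ (-1) ^ m * H m) atTop (𝓝 0) := by
    refine squeeze_zero_norm (fun m ↦ ?_)
      (tendsto_zero_iff_norm_tendsto_zero.1 hg.tendsto_atTop_zero)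
    simp only [norm_mul, norm_pow, norm_neg, norm_one, one_pow, one_mul, ← hrec]
    rw [norm_of_nonneg (hH m), norm_of_nonneg (add_nonneg (hH _) (hH m))]
    linarith [hH (m + 1)]
  have htel := hlim.const_sub (H 0)
  rw [sub_zero] at htel
  refine tendsto_nhds_unique hg.hasSum.tendsto_sum_nat ?_
  simpa only [hpartial] using htel

/-- The expanded series, as a function of the shift `x`. -/
noncomputable def shiftedSeries (x : ℝ) : ℝ :=
  1 / 8 * ∑' n : ℕ, (-1) ^ n * (hypWeight (n + x) * (20 * (n + x) + 3))

theorem shiftedSeries_eq_wzSum {x : ℝ} (hx : 0 < x)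
    (hs : Summable fun n : ℕ ↦ (-1 : ℝ) ^ n * (hypWeight (n + x) * (20 * (n + x) + 3))) :
    shiftedSeries x = wzSum x := by
  have hpos (n : ℕ) : 0 < n + x := by positivity
  have hrec (n : ℕ) : wzSum ((n + 1 : ℕ) + x) + wzSum (n + x) =
      1 / 8 * (hypWeight (n + x) * (20 * (n + x) + 3)) := by
    rw [Nat.cast_succ, add_right_comm, wzSum_add_one_add (hpos n)]
  have htsum := tsum_alternating_eq_of_succ_add (fun n ↦ wzSum_nonneg (hpos n)) hrec
    ((hs.mul_left (1 / 8)).congr fun n ↦ by ring)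
  rw [Nat.cast_zero, zero_add] at htsum
  rw [← htsum, shiftedSeries, ← tsum_mul_left]
  exact tsum_congr fun n ↦ by ring

/-! ### Cauchy's cosine integral -/

/-- Cauchy's integral `∫ (2 cos θ)^p cos (qθ)` over `[0, π/2]`. -/
noncomputable def cosIntegral (p q : ℝ) : ℝ :=
  ∫ θ in (0 : ℝ)..π / 2, (2 * cos θ) ^ p * cos (q * θ)

theorem cos_pos_of_mem_Ioo_zero {θ : ℝ} (hθ : θ ∈ Ioo 0 (π / 2)) : 0 < cos θ :=
  cos_pos_of_mem_Ioo ⟨by linarith [hθ.1, pi_pos], hθ.2⟩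

theorem continuous_two_mul_cos_rpow {p : ℝ} (hp : 0 ≤ p) :
    Continuous fun θ : ℝ ↦ (2 * cos θ) ^ p :=
  (continuous_const.mul continuous_cos).rpow_const fun _ ↦ Or.inr hp

theorem intervalIntegrable_two_mul_cos_rpow {p : ℝ} (hp : -1 < p) :
    IntervalIntegrable (fun θ : ℝ ↦ (2 * cos θ) ^ p) volume 0 (π / 2) := by
  rcases le_or_gt 0 p with hp₀ | hp₀
  · exact (continuous_two_mul_cos_rpow hp₀).intervalIntegrable _ _
  have hdom := (((intervalIntegral.intervalIntegrable_rpow' hp (a := 0) (b := π / 2)).comp_sub_left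
    (π / 2)).const_mul ((4 / π) ^ p)).symm
  rw [sub_self, sub_zero] at hdom
  rw [intervalIntegrable_iff_integrableOn_Ioo_of_le (by positivity)] at hdom ⊢
  refine hdom.mono' (Measurable.aestronglyMeasurable (by fun_prop))
    ((ae_restrict_iff' measurableSet_Ioo).2 (.of_forall ?_))
  intro θ hθ
  have hcos := cos_pos_of_mem_Ioo_zero hθ
  have hgap : 0 < π / 2 - θ := sub_pos.2 hθ.2
  have hjordan : 4 / π * (π / 2 - θ) ≤ 2 * cos θ := by
    have := one_sub_mul_le_cos hθ.1.le hθ.2.le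
    field_simp at this ⊢
    linarith
  rw [norm_of_nonneg (by positivity), ← mul_rpow (by positivity) hgap.le]
  exact rpow_le_rpow_of_nonpos (by positivity) hjordan hp₀.le

theorem intervalIntegrable_cosIntegral {p : ℝ} (hp : -1 < p) (q : ℝ) :
    IntervalIntegrable (fun θ : ℝ ↦ (2 * cos θ) ^ p * cos (q * θ)) volume 0 (π / 2) :=
  (intervalIntegrable_two_mul_cos_rpow hp).mul_continuousOn (by fun_prop)

theorem hasDerivAt_cosIntegral_primitive {θ : ℝ} (hθ : 0 < cos θ) (p q : ℝ) :
    HasDerivAt (fun θ ↦ 2 * (p + 2) * (sin θ * (2 * cos θ) ^ (p + 1) * cos (q * θ)) -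
        q * ((2 * cos θ) ^ (p + 2) * sin (q * θ)))
      (((p + 2) ^ 2 - q ^ 2) * ((2 * cos θ) ^ (p + 2) * cos (q * θ)) -
        4 * (p + 1) * (p + 2) * ((2 * cos θ) ^ p * cos (q * θ))) θ := by
  have hcos : 0 < 2 * cos θ := by positivity
  have hbase : HasDerivAt (fun θ : ℝ ↦ 2 * cos θ) (2 * -sin θ) θ := (hasDerivAt_cos θ).const_mul 2
  have hlin : HasDerivAt (fun θ : ℝ ↦ q * θ) q θ := by
    simpa using (hasDerivAt_id θ).const_mul q
  refine (((((hasDerivAt_sin θ).mul (hbase.rpow_const (p := p + 1) (.inl hcos.ne'))).mul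
    hlin.cos).const_mul (2 * (p + 2))).sub
      (((hbase.rpow_const (p := p + 2) (.inl hcos.ne')).mul hlin.sin).const_mul q)).congr_deriv ?_
  have hpow₁ : (2 * cos θ) ^ (p + 1) = (2 * cos θ) ^ p * (2 * cos θ) := rpow_add_one hcos.ne' p
  have hpow₂ : (2 * cos θ) ^ (p + 2) = (2 * cos θ) ^ p * (2 * cos θ) ^ 2 := by
    rw [rpow_add hcos, rpow_two]
  rw [show p + 1 - 1 = p by ring, show p + 2 - 1 = p + 1 by ring, hpow₂]
  simp only [Pi.mul_apply, hpow₁]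
  linear_combination (-4 * (p + 2) * (p + 1) * (2 * cos θ) ^ p * cos (q * θ)) * sin_sq θ

theorem cosIntegral_recursion {p : ℝ} (hp : -1 < p) (q : ℝ) :
    ((p + 2) ^ 2 - q ^ 2) * cosIntegral (p + 2) q = 4 * (p + 1) * (p + 2) * cosIntegral p q := by
  have hint₂ := (intervalIntegrable_cosIntegral (p := p + 2) (by linarith) q).const_mul
    ((p + 2) ^ 2 - q ^ 2)
  have hint := (intervalIntegrable_cosIntegral hp q).const_mul (4 * (p + 1) * (p + 2))
  have hcont₁ := continuous_two_mul_cos_rpow (p := p + 1) (by linarith)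
  have hcont₂ := continuous_two_mul_cos_rpow (p := p + 2) (by linarith)
  have hftc := intervalIntegral.integral_eq_sub_of_hasDerivAt_of_le (by positivity)
    (by fun_prop) (fun θ hθ ↦ hasDerivAt_cosIntegral_primitive (cos_pos_of_mem_Ioo_zero hθ) p q)
    (hint₂.sub hint)
  rw [intervalIntegral.integral_sub hint₂ hint, intervalIntegral.integral_const_mul,
    intervalIntegral.integral_const_mul] at hftc
  simp only [cos_pi_div_two, sin_zero, mul_zero, zero_mul, sub_self,
    zero_rpow (by linarith : p + 1 ≠ 0), zero_rpow (by linarith : p + 2 ≠ 0)] at hftc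
  exact sub_eq_zero.1 hftc

theorem cosIntegral_add_two_mul_natCast {p : ℝ} (hp : 0 ≤ p) (q : ℝ) (n : ℕ) :
    cosIntegral (p + 2 * n) q =
      4 ^ n * ∫ θ in (0 : ℝ)..π / 2, cos θ ^ (2 * n) * ((2 * cos θ) ^ p * cos (q * θ)) := by
  rw [cosIntegral, ← intervalIntegral.integral_const_mul]
  refine intervalIntegral.integral_congr fun θ hθ ↦ ?_
  rw [uIcc_of_le (by positivity)] at hθ
  have hcos : 0 ≤ 2 * cos θ := mul_nonneg two_pos.le
    (cos_nonneg_of_neg_pi_div_two_le_of_le (by linarith [hθ.1, pi_pos]) hθ.2)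
  have hsplit : (2 * cos θ) ^ (p + 2 * n) = (2 * cos θ) ^ p * (2 * cos θ) ^ (2 * n) := by
    rw [← rpow_natCast (2 * cos θ), ← rpow_add_of_nonneg hcos hp (by positivity)]
    norm_num
  simp only [hsplit, mul_pow, pow_mul]
  ring

theorem tendsto_cosIntegral_div {p : ℝ} (hp : 0 ≤ p) (q : ℝ) :
    Tendsto (fun n : ℕ ↦ cosIntegral (p + 2 * n) q / cosIntegral (0 + 2 * n) 0) atTop
      (𝓝 (2 ^ p)) := by
  have := continuous_two_mul_cos_rpow hp
  have hlim := (EulerSine.tendsto_integral_cos_pow_mul_div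
    (f := fun θ : ℝ ↦ (((2 * cos θ) ^ p * cos (q * θ) : ℝ) : ℂ)) (by fun_prop)).comp
      (tendsto_id.const_mul_atTop' two_pos)
  have hre := (Complex.continuous_re.tendsto _).comp hlim
  simp only [cos_zero, mul_one, mul_zero, Complex.ofReal_re] at hre
  refine hre.congr fun n ↦ ?_
  simp only [Function.comp_apply, id, ← Complex.ofReal_pow, ← Complex.ofReal_mul]
  rw [intervalIntegral.integral_ofReal, ← Complex.ofReal_div, Complex.ofReal_re,
    cosIntegral_add_two_mul_natCast hp, cosIntegral_add_two_mul_natCast le_rfl,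
    mul_div_mul_left _ _ (by positivity)]
  simp

/-- The ratio which Cauchy's formula asserts to be `π/2`. -/
noncomputable def cauchyRatio (p q : ℝ) : ℝ :=
  cosIntegral p q * (Gamma (1 + (p + q) / 2) * Gamma (1 + (p - q) / 2)) / Gamma (1 + p)

theorem cauchyRatio_add_two {p q : ℝ} (hp : -1 < p) (hq : 0 < 1 + (p + q) / 2)
    (hq' : 0 < 1 + (p - q) / 2) : cauchyRatio (p + 2) q = cauchyRatio p q := by
  have hΓ := (Gamma_pos_of_pos (show 0 < 1 + p by linarith)).ne'
  have hp₁ : 0 < 1 + p := by linarith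
  rw [cauchyRatio, cauchyRatio, show 1 + (p + 2 + q) / 2 = 1 + (p + q) / 2 + 1 by ring,
    show 1 + (p + 2 - q) / 2 = 1 + (p - q) / 2 + 1 by ring,
    show 1 + (p + 2) = 1 + p + 1 + 1 by ring, Gamma_add_one hq.ne', Gamma_add_one hq'.ne',
    Gamma_add_one (by linarith), Gamma_add_one (by linarith)]
  rw [div_eq_div_iff (by positivity) hΓ]
  linear_combination (Gamma (1 + (p + q) / 2) * Gamma (1 + (p - q) / 2) * Gamma (1 + p) / 4) *
    cosIntegral_recursion hp q

theorem cauchyRatio_add_two_mul_natCast {p q : ℝ} (hp : -1 < p) (hq : 0 < 1 + (p + q) / 2)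
    (hq' : 0 < 1 + (p - q) / 2) (n : ℕ) : cauchyRatio (p + 2 * n) q = cauchyRatio p q := by
  induction n with
  | zero => simp
  | succ n ih =>
    have := n.cast_nonneg (α := ℝ)
    rw [← ih, Nat.cast_succ, mul_add_one, ← add_assoc,
      cauchyRatio_add_two (by linarith) (by linarith) (by linarith)]

theorem cauchyRatio_zero : cauchyRatio 0 0 = π / 2 := by
  simp [cauchyRatio, cosIntegral]

theorem tendsto_Gamma_two_mul_div_mul_gammaQuotient {p q : ℝ} (hp : -1 < p)
    (hq : 0 < 1 + (p + q) / 2) (hq' : 0 < 1 + (p - q) / 2) :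
    Tendsto (fun n : ℕ ↦ Gamma ((2 * n : ℕ) + 1) / Gamma ((2 * n : ℕ) + (1 + p)) *
      gammaQuotient (1 + (p + q) / 2) (1 + (p - q) / 2) 1 1 n) atTop (𝓝 (2 ^ p)⁻¹) := by
  have htwo : Tendsto (fun n : ℕ ↦ 2 * n) atTop atTop := tendsto_id.const_mul_atTop' two_pos
  have hdouble := ((Gamma_natCast_add_isEquivalent one_pos).div
    (Gamma_natCast_add_isEquivalent (show 0 < 1 + p by linarith))).comp_tendsto htwo
  refine (hdouble.mul (gammaQuotient_isEquivalent hq hq' one_pos one_pos)).symm.tendsto_nhds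
    (tendsto_const_nhds.congr' ?_)
  filter_upwards [eventually_gt_atTop 0] with n hn
  have hn : (0 : ℝ) < n := mod_cast hn
  have := (2 * n).factorial_pos
  have := rpow_pos_of_pos hn p
  simp only [Pi.mul_apply, Pi.div_apply, Function.comp_apply, sub_self, rpow_zero,
    add_sub_cancel_left, Nat.cast_mul, Nat.cast_ofNat, mul_rpow two_pos.le hn.le]
  rw [show 1 + (p + q) / 2 + (1 + (p - q) / 2) - 1 - 1 = p by ring]
  field_simp

theorem cauchyRatio_eq {p q : ℝ} (hp : 0 ≤ p) (hq : 0 < 1 + (p + q) / 2)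
    (hq' : 0 < 1 + (p - q) / 2) : cauchyRatio p q = π / 2 := by
  have hlim := (tendsto_cosIntegral_div hp q).mul
    (tendsto_Gamma_two_mul_div_mul_gammaQuotient (by linarith) hq hq')
  rw [mul_inv_cancel₀ (rpow_pos_of_pos two_pos p).ne'] at hlim
  have hone : cauchyRatio p q / cauchyRatio 0 0 = 1 := by
    refine tendsto_nhds_unique tendsto_const_nhds (hlim.congr fun n ↦ ?_)
    rw [← cauchyRatio_add_two_mul_natCast (by linarith) hq hq' n,
      ← cauchyRatio_add_two_mul_natCast (p := 0) (by norm_num) (by norm_num) (by norm_num) n]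
    rw [cauchyRatio, cauchyRatio, gammaQuotient, Nat.cast_mul, Nat.cast_ofNat,
      show 1 + (p + 2 * n + q) / 2 = n + (1 + (p + q) / 2) by ring,
      show 1 + (p + 2 * n - q) / 2 = n + (1 + (p - q) / 2) by ring,
      show 1 + (0 + 2 * n + 0) / 2 = (n + 1 : ℝ) by ring,
      show 1 + (0 + 2 * n - 0) / 2 = (n + 1 : ℝ) by ring,
      show 1 + (p + 2 * n) = 2 * n + (1 + p) by ring,
      show 1 + (0 + 2 * n) = (2 * n + 1 : ℝ) by ring, div_div_div_eq]
    ring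
  rw [cauchyRatio_zero, div_eq_one_iff_eq (by positivity)] at hone
  exact hone

/- `Γ` and `⁻¹` both take the value `0` where they have a pole, so the formula is also correct when
`1 + (p ± q) / 2` is a nonpositive integer. -/
theorem cosIntegral_eq {p : ℝ} (hp : -1 < p) (q : ℝ) :
    cosIntegral p q =
      π / 2 * Gamma (1 + p) * (Gamma (1 + (p + q) / 2))⁻¹ * (Gamma (1 + (p - q) / 2))⁻¹ := by
  obtain ⟨n, hn⟩ := exists_nat_gt (|q| - p)
  induction n generalizing p with
  | zero =>
    rw [Nat.cast_zero, sub_neg] at hn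
    obtain ⟨hq, hq'⟩ := abs_lt.1 hn
    have h₁ : 0 < 1 + (p + q) / 2 := by linarith
    have h₂ : 0 < 1 + (p - q) / 2 := by linarith
    have hΓ₁ := (Gamma_pos_of_pos h₁).ne'
    have hΓ₂ := (Gamma_pos_of_pos h₂).ne'
    have hΓ := (Gamma_pos_of_pos (show 0 < 1 + p by linarith)).ne'
    have heq := cauchyRatio_eq ((abs_nonneg q).trans hn.le) h₁ h₂
    rw [cauchyRatio, div_eq_iff hΓ] at heq
    rw [mul_assoc, ← mul_inv, ← heq, mul_inv_cancel_right₀ (mul_ne_zero hΓ₁ hΓ₂)]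
  | succ n ih =>
    have hstep := ih (p := p + 2) (by linarith) (by push_cast at hn; linarith)
    have hrec := cosIntegral_recursion hp q
    have h₁ : p + 1 ≠ 0 := by linarith
    have h₂ : p + 2 ≠ 0 := by linarith
    rw [hstep, show 1 + (p + 2) = 1 + p + 1 + 1 by ring, Gamma_add_one (by linarith),
      Gamma_add_one (by linarith)] at hrec
    rw [inv_Gamma_eq_mul_inv_Gamma_add_one (1 + (p + q) / 2),
      inv_Gamma_eq_mul_inv_Gamma_add_one (1 + (p - q) / 2),
      show 1 + (p + q) / 2 + 1 = 1 + (p + 2 + q) / 2 by ring,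
      show 1 + (p - q) / 2 + 1 = 1 + (p + 2 - q) / 2 by ring]
    apply mul_left_cancel₀ (mul_ne_zero (mul_ne_zero four_ne_zero h₁) h₂)
    rw [← hrec]
    ring

/-! ### Dougall's bilateral sum -/

theorem inner_toLp_liftIoc {a T : ℝ} [Fact (0 < T)] {f g : ℝ → ℂ}
    (hf : MemLp (AddCircle.liftIoc T a f) 2 AddCircle.haarAddCircle)
    (hg : MemLp (AddCircle.liftIoc T a g) 2 AddCircle.haarAddCircle) :
    inner ℂ hf.toLp hg.toLp = T⁻¹ • ∫ x in a..a + T, conj (f x) * g x := by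
  rw [L2.inner_def, ← AddCircle.integral_liftIoc_eq_intervalIntegral,
    ← AddCircle.integral_haarAddCircle]
  refine integral_congr_ae ?_
  filter_upwards [hf.coeFn_toLp, hg.coeFn_toLp] with x hfx hgx
  rw [hfx, hgx, RCLike.inner_apply, mul_comm]
  rfl

theorem hasSum_conj_fourierCoeffOn_mul {a b : ℝ} {f g : ℝ → ℂ} (hab : a < b)
    (hf : MemLp f 2 (volume.restrict (Ioc a b))) (hg : MemLp g 2 (volume.restrict (Ioc a b))) :
    HasSum (fun i ↦ conj (fourierCoeffOn hab f i) * fourierCoeffOn hab g i)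
      ((b - a)⁻¹ • ∫ x in a..b, conj (f x) * g x) := by
  have := Fact.mk (sub_pos.2 hab)
  rw [← add_sub_cancel a b] at hf hg
  have hF := hf.memLp_liftIoc.haarAddCircle
  have hG := hg.memLp_liftIoc.haarAddCircle
  have hparseval := fourierBasis.hasSum_inner_mul_inner hF.toLp hG.toLp
  rw [inner_toLp_liftIoc, add_sub_cancel] at hparseval
  refine hparseval.congr_fun fun i ↦ ?_
  rw [← fourierBasis.repr_apply_apply, ← inner_conj_symm, ← fourierBasis.repr_apply_apply,
    fourierBasis_repr, fourierBasis_repr, fourierCoeff_congr_ae hF.coeFn_toLp,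
    fourierCoeff_congr_ae hG.coeFn_toLp, fourierCoeff_liftIoc_eq, fourierCoeff_liftIoc_eq]
  simp

/-- The power `(2 cos θ)^p` modulated by the frequency `q`. -/
noncomputable def cosWave (p q θ : ℝ) : ℂ :=
  ((2 * cos θ) ^ p : ℝ) * Complex.exp ((q * θ : ℝ) * Complex.I)

theorem intervalIntegrable_cosWave {p : ℝ} (hp : -1 < p) (q : ℝ) :
    IntervalIntegrable (cosWave p q) volume 0 (π / 2) :=
  have h := intervalIntegrable_two_mul_cos_rpow hp
  .mul_continuousOn (f := fun θ ↦ (((2 * cos θ) ^ p : ℝ) : ℂ)) ⟨h.1.ofReal, h.2.ofReal⟩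
    (by fun_prop)

theorem cosWave_neg (p q θ : ℝ) : cosWave p q (-θ) = cosWave p (-q) θ := by
  simp [cosWave]

theorem integral_cosWave {p : ℝ} (hp : -1 < p) (q : ℝ) :
    ∫ θ in -(π / 2)..π / 2, cosWave p q θ = (2 * cosIntegral p q : ℝ) := by
  have hint := intervalIntegrable_cosWave hp
  have hreflect : IntervalIntegrable (cosWave p q) volume (-(π / 2)) 0 := by
    simpa [cosWave_neg] using ((IntervalIntegrable.iff_comp_neg (by simp)).1 (hint (-q))).symm
  have hsymm := intervalIntegral.integral_comp_neg (a := 0) (b := π / 2) (cosWave p q)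
  rw [neg_zero] at hsymm
  rw [← intervalIntegral.integral_add_adjacent_intervals hreflect (hint q), ← hsymm]
  simp only [cosWave_neg]
  rw [← intervalIntegral.integral_add (hint _) (hint _), cosIntegral,
    ← intervalIntegral.integral_const_mul, ← intervalIntegral.integral_ofReal]
  refine intervalIntegral.integral_congr fun θ _ ↦ ?_
  simp only [cosWave, ← mul_add]
  push_cast
  rw [mul_left_comm, Complex.two_cos]
  ring_nf

theorem neg_pi_div_two_lt_pi_div_two : -(π / 2) < π / 2 := by linarith [pi_pos]

theorem fourierCoeffOn_cosWave {p : ℝ} (hp : -1 < p) (q : ℝ) (k : ℤ) :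
    fourierCoeffOn neg_pi_div_two_lt_pi_div_two (cosWave p q) k =
      (2 / π * cosIntegral p (q - 2 * k) : ℝ) := by
  have hπ : (π : ℂ) ≠ 0 := mod_cast pi_pos.ne'
  have hshift (θ : ℝ) : fourier (-k) (θ : AddCircle (π / 2 - -(π / 2))) • cosWave p q θ =
      cosWave p (q - 2 * k) θ := by
    rw [fourier_coe_apply, cosWave, smul_eq_mul, mul_left_comm, ← Complex.exp_add, cosWave]
    congr 2
    push_cast
    field_simp
    ring
  simp only [fourierCoeffOn_eq_integral, hshift]
  rw [integral_cosWave hp, Complex.real_smul, ← Complex.ofReal_mul]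
  congr 1
  ring

theorem conj_cosWave_mul_cosWave {θ : ℝ} (hθ : 0 < cos θ) (p p' q r : ℝ) :
    conj (cosWave p q θ) * cosWave p' r θ = cosWave (p + p') (r - q) θ := by
  simp only [cosWave, rpow_add (mul_pos two_pos hθ), map_mul, Complex.conj_ofReal,
    ← Complex.exp_conj, Complex.conj_I]
  rw [mul_mul_mul_comm, ← Complex.exp_add]
  push_cast
  ring_nf

theorem memLp_cosWave {p : ℝ} (hp : -(1 / 2) < p) (q : ℝ) :
    MemLp (cosWave p q) 2 (volume.restrict (Ioc (-(π / 2)) (π / 2))) := by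
  have hmeas : Measurable (cosWave p q) := by unfold cosWave; fun_prop
  rw [memLp_two_iff_integrable_sq_norm hmeas.aestronglyMeasurable]
  have hpos := intervalIntegrable_two_mul_cos_rpow (show -1 < p + p by linarith)
  have hneg := ((IntervalIntegrable.iff_comp_neg (by simp)).1 hpos).symm
  simp only [cos_neg, neg_zero] at hneg
  have hint := hneg.trans hpos
  rw [intervalIntegrable_iff_integrableOn_Ioo_of_le neg_pi_div_two_lt_pi_div_two.le] at hint
  refine (integrableOn_Ioc_iff_integrableOn_Ioo (by simp)).2
    (hint.congr_fun (fun θ hθ ↦ ?_) measurableSet_Ioo)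
  have hcos := cos_pos_of_mem_Ioo hθ
  simp only [cosWave, norm_mul, Complex.norm_real, Complex.norm_exp_ofReal_mul_I, mul_one,
    norm_eq_abs, sq_abs]
  rw [rpow_add (by positivity), sq]

theorem hasSum_cosIntegral_mul_cosIntegral {p p' : ℝ} (hp : -(1 / 2) < p) (hp' : -(1 / 2) < p')
    (q r : ℝ) :
    HasSum (fun k : ℤ ↦ cosIntegral p (q - 2 * k) * cosIntegral p' (r - 2 * k))
      (π / 2 * cosIntegral (p + p') (r - q)) := by
  have hparseval := hasSum_conj_fourierCoeffOn_mul neg_pi_div_two_lt_pi_div_two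
    (memLp_cosWave hp q) (memLp_cosWave hp' r)
  have hprod : ∫ θ in -(π / 2)..π / 2, conj (cosWave p q θ) * cosWave p' r θ =
      (2 * cosIntegral (p + p') (r - q) : ℝ) := by
    rw [← integral_cosWave (by linarith)]
    simp only [intervalIntegral.integral_of_le neg_pi_div_two_lt_pi_div_two.le,
      integral_Ioc_eq_integral_Ioo]
    exact setIntegral_congr_fun measurableSet_Ioo fun θ hθ ↦
      conj_cosWave_mul_cosWave (cos_pos_of_mem_Ioo hθ) p p' q r
  simp only [hprod, fourierCoeffOn_cosWave (show -1 < p by linarith),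
    fourierCoeffOn_cosWave (show -1 < p' by linarith), Complex.conj_ofReal, Complex.real_smul,
    ← Complex.ofReal_mul, Complex.hasSum_ofReal] at hparseval
  have := pi_pos.ne'
  have hscale : π / 2 * cosIntegral (p + p') (r - q) =
      π ^ 2 / 4 * ((π / 2 - -(π / 2))⁻¹ * (2 * cosIntegral (p + p') (r - q))) := by
    rw [sub_neg_eq_add, add_halves]
    field_simp
    ring
  rw [hscale]
  exact (hparseval.mul_left _).congr_fun fun k ↦ by field_simp; ring

theorem hasSum_inv_Gamma_bilateral {a b c d : ℝ} (hac : 3 / 2 < a + c) (hbd : 3 / 2 < b + d) :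
    HasSum (fun k : ℤ ↦ (Gamma (c - k))⁻¹ * (Gamma (a + k))⁻¹ *
        ((Gamma (d - k))⁻¹ * (Gamma (b + k))⁻¹))
      (Gamma (a + b + c + d - 3) / (Gamma (a + c - 1) * Gamma (b + d - 1) *
        (Gamma (a + d - 1) * Gamma (b + c - 1)))) := by
  have hcauchy {u v : ℝ} (huv : 3 / 2 < u + v) (k : ℤ) :
      cosIntegral (u + v - 2) (v - u - 2 * k) =
        π / 2 * Gamma (u + v - 1) * ((Gamma (v - k))⁻¹ * (Gamma (u + k))⁻¹) := by
    rw [cosIntegral_eq (by linarith), mul_assoc]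
    ring_nf
  have hvalue : cosIntegral (a + c - 2 + (b + d - 2)) (d - b - (c - a)) =
      π / 2 * Gamma (a + b + c + d - 3) * ((Gamma (a + d - 1))⁻¹ * (Gamma (b + c - 1))⁻¹) := by
    rw [cosIntegral_eq (by linarith), mul_assoc]
    ring_nf
  have hsum := hasSum_cosIntegral_mul_cosIntegral (show -(1 / 2) < a + c - 2 by linarith)
    (show -(1 / 2) < b + d - 2 by linarith) (c - a) (d - b)
  simp only [hcauchy hac, hcauchy hbd, hvalue] at hsum
  have := (Gamma_pos_of_pos (show 0 < a + c - 1 by linarith)).ne'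
  have := (Gamma_pos_of_pos (show 0 < b + d - 1 by linarith)).ne'
  have := pi_pos.ne'
  have hscale : Gamma (a + b + c + d - 3) / (Gamma (a + c - 1) * Gamma (b + d - 1) *
      (Gamma (a + d - 1) * Gamma (b + c - 1))) =
        (π / 2 * Gamma (a + c - 1) * (π / 2 * Gamma (b + d - 1)))⁻¹ *
          (π / 2 * (π / 2 * Gamma (a + b + c + d - 3) *
            ((Gamma (a + d - 1))⁻¹ * (Gamma (b + c - 1))⁻¹))) := by
    field_simp
  rw [hscale]
  exact (hsum.mul_left _).congr_fun fun k ↦ by field_simp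

theorem inv_Gamma_mul_inv_Gamma_sub_natCast {c d : ℝ} (hc : c < 1) (hd : d < 1) (a b : ℝ) (k : ℕ) :
    (Gamma (c - k))⁻¹ * (Gamma (a + k))⁻¹ * ((Gamma (d - k))⁻¹ * (Gamma (b + k))⁻¹) =
      sin (π * c) * sin (π * d) / π ^ 2 * gammaQuotient (1 - c) (1 - d) a b k := by
  have hsign : ((-1 : ℝ) ^ k) ^ 2 = 1 := by rw [← pow_mul, pow_mul', neg_one_sq, one_pow]
  rw [inv_Gamma_sub_natCast hc, inv_Gamma_sub_natCast hd, gammaQuotient, add_comm a, add_comm b,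
    div_eq_mul_inv _ (_ * _), mul_inv]
  linear_combination sin (π * c) * sin (π * d) / π ^ 2 * Gamma (k + (1 - c)) *
    Gamma (k + (1 - d)) * (Gamma (k + a))⁻¹ * (Gamma (k + b))⁻¹ * hsign

theorem dougall_bilateral_sum {a b c d : ℝ} (ha : a < 2) (hb : b < 2) (hc : c < 1) (hd : d < 1)
    (hac : 3 / 2 < a + c) (hbd : 3 / 2 < b + d) :
    sin (π * c) * sin (π * d) * ∑' k, gammaQuotient (1 - c) (1 - d) a b k +
        sin (π * a) * sin (π * b) * ∑' k, gammaQuotient (2 - a) (2 - b) (c + 1) (d + 1) k =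
      π ^ 2 * (Gamma (a + b + c + d - 3) / (Gamma (a + c - 1) * Gamma (b + d - 1) *
        (Gamma (a + d - 1) * Gamma (b + c - 1)))) := by
  have hsin (s : ℝ) : sin (π * (s - 1)) = -sin (π * s) := by rw [mul_sub, mul_one, sin_sub_pi]
  have hright := (summable_gammaQuotient (a := 1 - c) (b := 1 - d) (c := a) (d := b)
    (by linarith) (by linarith) (by linarith) (by linarith) (by linarith)).hasSum.mul_left
      (sin (π * c) * sin (π * d) / π ^ 2)
  have hleft := (summable_gammaQuotient (a := 2 - a) (b := 2 - b) (c := c + 1) (d := d + 1)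
    (by linarith) (by linarith) (by linarith) (by linarith) (by linarith)).hasSum.mul_left
      (sin (π * a) * sin (π * b) / π ^ 2)
  have hsum := HasSum.of_nat_of_neg_add_one (f := fun k : ℤ ↦ (Gamma (c - k))⁻¹ *
      (Gamma (a + k))⁻¹ * ((Gamma (d - k))⁻¹ * (Gamma (b + k))⁻¹))
    (hright.congr_fun fun k ↦ by
      simpa using inv_Gamma_mul_inv_Gamma_sub_natCast hc hd a b k)
    (hleft.congr_fun fun k ↦ by
      have h := inv_Gamma_mul_inv_Gamma_sub_natCast (c := a - 1) (d := b - 1)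
        (by linarith) (by linarith) (c + 1) (d + 1) k
      rw [hsin, hsin, neg_mul_neg] at h
      convert h using 1
      · push_cast; ring_nf
      · ring_nf)
  rw [← hsum.unique (hasSum_inv_Gamma_bilateral hac hbd)]
  have := pi_pos.ne'
  field_simp

/-- The general term of the series produced from `∑ wzTerm x k` by Dougall's bilateral formula. -/
noncomputable def dualTerm (x : ℝ) : ℕ → ℝ :=
  gammaQuotient (1 - 2 * x) (1 - x) (3 / 2) (3 / 2 - x)

theorem wzFactor_mul_Gamma_quotient {x : ℝ} (hx : 0 < x) :
    2 * x * wzFactor x * (π ^ 2 * (Gamma (2 * x) / (Gamma (1 / 2 + x) * Gamma (1 / 2 + x) *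
      (Gamma (1 / 2) * Gamma (1 / 2 + 2 * x))))) = 1 / π := by
  have hΓ {s : ℝ} (hs : 0 < s) := (Gamma_pos_of_pos hs).ne'
  have := hΓ (show 0 < 2 * x by linarith)
  have := hΓ (show 0 < 1 / 2 + x by linarith)
  have := hΓ (show 0 < 1 / 2 + 2 * x by linarith)
  have hsq : Gamma (1 / 2) ^ 2 = π := by rw [Gamma_one_half_eq, sq_sqrt pi_pos.le]
  simp only [wzFactor, pochG, Gamma_one, add_comm 1 (2 * x), Gamma_add_one (mul_pos two_pos hx).ne']
  field_simp
  linear_combination (-(π + Gamma (1 / 2) ^ 2)) * hsq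

theorem wzFactor_mul_tsum_add {x : ℝ} (hx : 0 < x) (hx' : x < 1 / 2) :
    2 * x * wzFactor x * cos (π * x) *
      (∑' k, wzTerm x k + 2 * sin (π * x) ^ 2 * ∑' k, dualTerm x k) = 1 / π := by
  have hdougall := dougall_bilateral_sum (a := 1 + x) (b := 1 + 2 * x) (c := 1 / 2)
    (d := 1 / 2 - x) (by linarith) (by linarith) (by linarith) (by linarith) (by linarith)
    (by linarith)
  have hwz : gammaQuotient (1 - 1 / 2) (1 - (1 / 2 - x)) (1 + x) (1 + 2 * x) = wzTerm x := by
    ext k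
    rw [wzTerm, gammaQuotient, gammaQuotient, mul_comm (Gamma (k + (1 + x)))]
    ring_nf
  have hdual : gammaQuotient (2 - (1 + x)) (2 - (1 + 2 * x)) (1 / 2 + 1) (1 / 2 - x + 1) =
      dualTerm x := by
    ext k
    rw [dualTerm, gammaQuotient, gammaQuotient, mul_comm (Gamma (k + (1 - 2 * x)))]
    ring_nf
  have hsin : sin (π * (1 + x)) * sin (π * (1 + 2 * x)) = 2 * sin (π * x) ^ 2 * cos (π * x) := by
    rw [mul_add, mul_add, mul_one, add_comm, sin_add_pi, add_comm π, sin_add_pi, mul_left_comm,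
      sin_two_mul]
    ring
  rw [hwz, hdual, hsin, mul_one_div, sin_pi_div_two, mul_sub, mul_one_div, sin_pi_div_two_sub,
    show 1 + x + (1 + 2 * x) + 1 / 2 + (1 / 2 - x) - 3 = 2 * x by ring,
    show 1 + x + 1 / 2 - 1 = 1 / 2 + x by ring,
    show 1 + 2 * x + (1 / 2 - x) - 1 = 1 / 2 + x by ring,
    show 1 + x + (1 / 2 - x) - 1 = 1 / 2 by ring,
    show 1 + 2 * x + 1 / 2 - 1 = 1 / 2 + 2 * x by ring] at hdougall
  rw [← wzFactor_mul_Gamma_quotient hx, ← hdougall]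
  ring

/-! ### Interlacing series -/

/-- The sequences `u` and `v` interlace: `u 0 ≥ v 0 ≥ u 1 ≥ v 1 ≥ ⋯ ≥ 0`. -/
structure Interlacing (u v : ℕ → ℝ) : Prop where
  nonneg : ∀ n, 0 ≤ u n
  le : ∀ n, v n ≤ u n
  succ_le : ∀ n, u (n + 1) ≤ v n

namespace Interlacing

variable {u v : ℕ → ℝ}

theorem sum_sub_le (h : Interlacing u v) (n : ℕ) :
    ∑ j ∈ Finset.range n, (u j - v j) ≤ u 0 := by
  suffices ∑ j ∈ Finset.range n, (u j - v j) ≤ u 0 - u n by linarith [h.nonneg n]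
  induction n with
  | zero => simp
  | succ n ih => rw [Finset.sum_range_succ]; linarith [h.succ_le n]

theorem summable_sub (h : Interlacing u v) : Summable fun j ↦ u j - v j :=
  summable_of_sum_range_le (fun j ↦ sub_nonneg.2 (h.le j)) h.sum_sub_le

theorem shift (h : Interlacing u v) (N : ℕ) :
    Interlacing (fun j ↦ u (j + N)) fun j ↦ v (j + N) where
  nonneg n := h.nonneg _
  le n := h.le _
  succ_le n := by rw [add_right_comm]; exact h.succ_le _

theorem abs_tsum_sub_sum_le (h : Interlacing u v) (N : ℕ) :
    |∑' j, (u j - v j) - ∑ j ∈ Finset.range N, (u j - v j)| ≤ u N := by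
  have hnonneg (j : ℕ) : 0 ≤ u (j + N) - v (j + N) := sub_nonneg.2 (h.le _)
  rw [← h.summable_sub.sum_add_tsum_nat_add N, add_sub_cancel_left,
    abs_of_nonneg (tsum_nonneg hnonneg)]
  simpa using Real.tsum_le_of_sum_range_le hnonneg (h.shift N).sum_sub_le

theorem tendsto_tsum_sub {α : Type*} {l : Filter α} {U V : α → ℕ → ℝ}
    (h : Interlacing u v) (hu₀ : Tendsto u atTop (𝓝 0)) (hUV : ∀ᶠ x in l, Interlacing (U x) (V x))
    (hU : ∀ j, Tendsto (U · j) l (𝓝 (u j))) (hV : ∀ j, Tendsto (V · j) l (𝓝 (v j))) :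
    Tendsto (fun x ↦ ∑' j, (U x j - V x j)) l (𝓝 (∑' j, (u j - v j))) := by
  rw [Metric.tendsto_nhds]
  intro ε hε
  obtain ⟨N, hN⟩ := (hu₀.eventually (gt_mem_nhds (show 0 < ε / 3 by positivity))).exists
  have hpartial : Tendsto (fun x ↦ ∑ j ∈ Finset.range N, (U x j - V x j)) l
      (𝓝 (∑ j ∈ Finset.range N, (u j - v j))) :=
    tendsto_finsetSum _ fun j _ ↦ (hU j).sub (hV j)
  filter_upwards [hUV, (hU N).eventually (gt_mem_nhds hN),
    Metric.tendsto_nhds.1 hpartial (ε / 3) (by positivity)] with x hx hUN hsum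
  have htail := h.abs_tsum_sub_sum_le N
  have htailx := hx.abs_tsum_sub_sum_le N
  rw [dist_eq] at hsum ⊢
  rw [abs_le] at htail htailx
  rw [abs_lt] at hsum ⊢
  constructor <;> linarith

end Interlacing

theorem interlacing_wzTerm_dualTerm {x : ℝ} (hx : 0 ≤ x) (hx' : x < 1 / 4) :
    Interlacing (wzTerm x) (dualTerm x) where
  nonneg n := (gammaQuotient_pos (by linarith) (by linarith) (by linarith) (by linarith) n).le
  le n := gammaQuotient_le_gammaQuotient (by linarith) (by linarith) (by linarith) (by linarith)
    (by linarith) (by linarith) (by linarith) (by linarith) (by ring) (by ring) n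
  succ_le n := by
    rw [wzTerm, gammaQuotient_succ_eq_shift]
    exact gammaQuotient_le_gammaQuotient (by linarith) (by linarith) (by linarith) (by linarith)
      (by linarith) (by linarith) (by linarith) (by linarith) (by ring) (by ring) n

theorem tendsto_wzTerm_zero : Tendsto (wzTerm 0) atTop (𝓝 0) := by
  refine (gammaQuotient_isEquivalent (by norm_num) (by norm_num) (by norm_num)
    (by norm_num)).symm.tendsto_nhds ?_
  have := (tendsto_rpow_neg_atTop one_pos).comp tendsto_natCast_atTop_atTop
  refine this.congr fun n ↦ ?_
  norm_num

/-- The difference of the series `∑ wzTerm x k` and `∑ dualTerm x k`, summed termwise so that it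
converges at `x = 0` too. -/
noncomputable def seriesGap (x : ℝ) : ℝ :=
  ∑' k, (wzTerm x k - dualTerm x k)

theorem tendsto_seriesGap : Tendsto seriesGap (𝓝[>] 0) (𝓝 (seriesGap 0)) := by
  have hlim {f : ℝ → ℝ} (hf : Continuous f) : Tendsto f (𝓝[>] 0) (𝓝 (f 0)) :=
    tendsto_nhdsWithin_of_tendsto_nhds (hf.tendsto 0)
  refine (interlacing_wzTerm_dualTerm le_rfl (by norm_num)).tendsto_tsum_sub tendsto_wzTerm_zero
    ?_ (fun j ↦ ?_) fun j ↦ ?_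
  · filter_upwards [Ioo_mem_nhdsGT (show (0 : ℝ) < 1 / 4 by norm_num)] with x hx
    exact interlacing_wzTerm_dualTerm hx.1.le hx.2
  all_goals
    refine tendsto_gammaQuotient_nhds (hlim ?_) (hlim ?_) (hlim ?_) (hlim ?_) ?_ ?_ ?_ ?_ j <;>
      first | fun_prop | norm_num

/-! ### Catalan's constant -/

/-- Wallis' integral of `cos^n` over a quarter period. -/
noncomputable def wallisIntegral (n : ℕ) : ℝ :=
  ∫ t in (0 : ℝ)..π / 2, cos t ^ n

theorem cosIntegral_natCast_zero (n : ℕ) : cosIntegral n 0 = 2 ^ n * wallisIntegral n := by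
  simp only [cosIntegral, wallisIntegral, ← intervalIntegral.integral_const_mul, rpow_natCast,
    mul_pow, zero_mul, cos_zero, mul_one]

theorem sq_Gamma_div_Gamma_eq_wallisIntegral (n : ℕ) :
    (Gamma ((n + 1) / 2) / Gamma ((n + 1) / 2 + 1 / 2)) ^ 2 = 4 / π * wallisIntegral n ^ 2 := by
  have : (0 : ℝ) ≤ n := n.cast_nonneg
  have hΓ := (Gamma_pos_of_pos (show (0 : ℝ) < (n + 1) / 2 + 1 / 2 by positivity)).ne'
  have hcauchy := cosIntegral_eq (show (-1 : ℝ) < n by linarith) 0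
  have hdup := Gamma_mul_Gamma_add_half (((n : ℝ) + 1) / 2)
  rw [show 1 - 2 * (((n : ℝ) + 1) / 2) = -n by ring, rpow_neg two_pos.le, rpow_natCast,
    show 2 * (((n : ℝ) + 1) / 2) = 1 + n by ring] at hdup
  rw [cosIntegral_natCast_zero, add_zero, sub_zero,
    show 1 + (n : ℝ) / 2 = (n + 1) / 2 + 1 / 2 by ring] at hcauchy
  have hwallis : 2 * wallisIntegral n =
      √π * (Gamma ((n + 1) / 2) / Gamma ((n + 1) / 2 + 1 / 2)) := by
    generalize Gamma (((n : ℝ) + 1) / 2 + 1 / 2) = g at *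
    have hsq := sq_sqrt pi_pos.le
    have := (sqrt_pos.2 pi_pos).ne'
    field_simp at hcauchy hdup ⊢
    have hpow : (2 : ℝ) ^ n ≠ 0 := by positivity
    refine mul_right_cancel₀ (mul_ne_zero hpow hΓ) ?_
    linear_combination hcauchy - √π * hdup - Gamma (1 + n) * hsq
  have hπ := pi_ne_zero
  rw [show wallisIntegral n ^ 2 = (2 * wallisIntegral n) ^ 2 / 4 by ring, hwallis, mul_pow,
    sq_sqrt pi_pos.le]
  field_simp

theorem wzTerm_zero_eq_wallisIntegral (j : ℕ) :
    wzTerm 0 j = 4 / π * wallisIntegral (2 * j) ^ 2 := by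
  rw [← sq_Gamma_div_Gamma_eq_wallisIntegral, wzTerm, gammaQuotient, Nat.cast_mul]
  ring_nf

theorem dualTerm_zero_eq_wallisIntegral (j : ℕ) :
    dualTerm 0 j = 4 / π * wallisIntegral (2 * j + 1) ^ 2 := by
  rw [← sq_Gamma_div_Gamma_eq_wallisIntegral, dualTerm, gammaQuotient, Nat.cast_succ, Nat.cast_mul]
  ring_nf

theorem sum_wzTerm_sub_dualTerm_zero (N : ℕ) :
    ∑ j ∈ Finset.range N, (wzTerm 0 j - dualTerm 0 j) =
      4 / π * ∑ n ∈ Finset.range (2 * N), (-1) ^ n * wallisIntegral n ^ 2 := by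
  induction N with
  | zero => simp
  | succ N ih =>
    rw [Finset.sum_range_succ, ih, Nat.mul_succ, Finset.sum_range_succ, Finset.sum_range_succ,
      wzTerm_zero_eq_wallisIntegral, dualTerm_zero_eq_wallisIntegral,
      pow_succ (-1 : ℝ) (2 * N), pow_mul]
    norm_num
    ring

theorem sinc_pos {t : ℝ} (h₀ : 0 ≤ t) (hπ : t < π) : 0 < sinc t := by
  rcases h₀.eq_or_lt with rfl | h
  · simp
  · rw [sinc_of_ne_zero h.ne']
    exact div_pos (sin_pos_of_pos_of_lt_pi h hπ) h

theorem continuousOn_inv_sinc : ContinuousOn (fun t ↦ (sinc t)⁻¹) (uIcc 0 (π / 2)) := by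
  rw [uIcc_of_le (by positivity)]
  exact continuous_sinc.continuousOn.inv₀ fun t ht ↦
    (sinc_pos ht.1 (by linarith [ht.2, pi_pos])).ne'

theorem abs_inv_one_add_sub_sum_le {u : ℝ} (hu : 0 ≤ u) (M : ℕ) :
    |(1 + u)⁻¹ - ∑ n ∈ Finset.range M, (-u) ^ n| ≤ u ^ M := by
  have hremainder : (1 + u)⁻¹ - ∑ n ∈ Finset.range M, (-u) ^ n = (-u) ^ M * (1 + u)⁻¹ := by
    rw [geom_sum_eq (by linarith), show -u - 1 = -(1 + u) by ring]
    field_simp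
    ring
  rw [hremainder, abs_mul, abs_pow, abs_neg, abs_of_nonneg hu, abs_of_nonneg (by positivity)]
  exact mul_le_of_le_one_right (by positivity) (inv_le_one_of_one_le₀ (by linarith))

theorem hasDerivAt_arctan_tan_mul_tan {a t : ℝ} (ha : cos (a / 2) ≠ 0) (ha' : sin a ≠ 0)
    (ht : cos (t / 2) ≠ 0) :
    HasDerivAt (fun t ↦ 2 / sin a * arctan (tan (a / 2) * tan (t / 2)))
      (1 + cos a * cos t)⁻¹ t := by
  refine ((((hasDerivAt_tan ht).comp t ((hasDerivAt_id t).div_const 2)).const_mul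
    (tan (a / 2))).arctan.const_mul (2 / sin a)).congr_deriv ?_
  have hsin : sin a = 2 * sin (a / 2) * cos (a / 2) := by
    rw [← sin_two_mul, mul_div_cancel₀ _ two_ne_zero]
  have hdenom : 1 + cos a * cos t = 2 * ((cos (a / 2) * cos (t / 2)) ^ 2 +
      (sin (a / 2) * sin (t / 2)) ^ 2) := by
    have ha₂ := cos_two_mul (a / 2)
    have ht₂ := cos_two_mul (t / 2)
    rw [mul_div_cancel₀ _ two_ne_zero] at ha₂ ht₂
    rw [ha₂, ht₂, mul_pow, mul_pow, sin_sq, sin_sq]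
    ring
  have : 0 < (cos (a / 2) * cos (t / 2)) ^ 2 + (sin (a / 2) * sin (t / 2)) ^ 2 := by positivity
  have hs : sin (a / 2) ≠ 0 := by
    rintro h
    simp [hsin, h] at ha'
  have harctan : 1 + (tan (a / 2) * tan (t / 2)) ^ 2 =
      ((cos (a / 2) * cos (t / 2)) ^ 2 + (sin (a / 2) * sin (t / 2)) ^ 2) /
        (cos (a / 2) * cos (t / 2)) ^ 2 := by
    rw [tan_eq_sin_div_cos, tan_eq_sin_div_cos]
    field_simp
  simp only [Function.comp_apply, id]
  rw [hdenom, harctan, hsin, tan_eq_sin_div_cos]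
  field_simp

theorem cos_nonneg_of_mem_uIcc_zero {t : ℝ} (ht : t ∈ uIcc 0 (π / 2)) : 0 ≤ cos t := by
  rw [uIcc_of_le (by positivity)] at ht
  exact cos_nonneg_of_mem_Icc ⟨by linarith [ht.1, pi_pos], ht.2⟩

theorem intervalIntegrable_inv_one_add_mul_cos {c : ℝ} (hc : 0 ≤ c) :
    IntervalIntegrable (fun t ↦ (1 + c * cos t)⁻¹) volume 0 (π / 2) :=
  (ContinuousOn.inv₀ (by fun_prop) fun t ht ↦ by
    have := cos_nonneg_of_mem_uIcc_zero ht
    positivity).intervalIntegrable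

theorem integral_inv_one_add_cos_mul_cos {a : ℝ} (h₀ : 0 < a) (h₁ : a ≤ π / 2) :
    ∫ t in (0 : ℝ)..π / 2, (1 + cos a * cos t)⁻¹ = (sinc a)⁻¹ := by
  have hcos {s : ℝ} (hs₀ : 0 ≤ s) (hs₁ : s ≤ π / 2) : cos (s / 2) ≠ 0 :=
    (cos_pos_of_mem_Ioo ⟨by linarith [pi_pos], by linarith [pi_pos]⟩).ne'
  have hsin : sin a ≠ 0 := (sin_pos_of_pos_of_lt_pi h₀ (by linarith)).ne'
  have hderiv (t : ℝ) (ht : t ∈ uIcc 0 (π / 2)) :=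
    hasDerivAt_arctan_tan_mul_tan (t := t) (hcos h₀.le h₁) hsin <| by
      rw [uIcc_of_le (by positivity)] at ht
      exact hcos ht.1 ht.2
  rw [intervalIntegral.integral_eq_sub_of_hasDerivAt hderiv
    (intervalIntegrable_inv_one_add_mul_cos (cos_nonneg_of_mem_Icc ⟨by linarith, h₁⟩)),
    sinc_of_ne_zero h₀.ne', inv_div, show π / 2 / 2 = π / 4 by ring, tan_pi_div_four,
    mul_one, arctan_tan (by linarith) (by linarith)]
  simp

theorem abs_inv_sinc_sub_sum_le {a : ℝ} (h₀ : 0 < a) (h₁ : a ≤ π / 2) (M : ℕ) :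
    |(sinc a)⁻¹ - ∑ n ∈ Finset.range M, (-1) ^ n * cos a ^ n * wallisIntegral n| ≤
      cos a ^ M * wallisIntegral M := by
  have hcos : 0 ≤ cos a := cos_nonneg_of_mem_Icc ⟨by linarith, h₁⟩
  have hsum : ∑ n ∈ Finset.range M, (-1) ^ n * cos a ^ n * wallisIntegral n =
      ∫ t in (0 : ℝ)..π / 2, ∑ n ∈ Finset.range M, (-(cos a * cos t)) ^ n := by
    rw [intervalIntegral.integral_finsetSum fun n _ ↦
      Continuous.intervalIntegrable (by fun_prop) _ _]
    refine Finset.sum_congr rfl fun n _ ↦ ?_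
    simp only [wallisIntegral, ← intervalIntegral.integral_const_mul, neg_pow (cos a * cos _),
      mul_pow, mul_assoc]
  rw [← integral_inv_one_add_cos_mul_cos h₀ h₁, hsum, ← intervalIntegral.integral_sub
    (intervalIntegrable_inv_one_add_mul_cos hcos) (Continuous.intervalIntegrable (by fun_prop) _ _),
    wallisIntegral, ← intervalIntegral.integral_const_mul, ← norm_eq_abs]
  refine intervalIntegral.norm_integral_le_of_norm_le (by positivity) (ae_of_all _ fun t ht ↦ ?_)
    (Continuous.intervalIntegrable (by fun_prop) _ _)
  rw [norm_eq_abs, ← mul_pow]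
  exact abs_inv_one_add_sub_sum_le
    (mul_nonneg hcos (cos_nonneg_of_mem_uIcc_zero (Ioc_subset_Icc_self.trans Icc_subset_uIcc ht))) M

theorem abs_integral_inv_sinc_sub_sum_le (M : ℕ) :
    |(∫ a in (0 : ℝ)..π / 2, (sinc a)⁻¹) -
      ∑ n ∈ Finset.range M, (-1) ^ n * wallisIntegral n ^ 2| ≤ wallisIntegral M ^ 2 := by
  have hsum : ∑ n ∈ Finset.range M, (-1) ^ n * wallisIntegral n ^ 2 =
      ∫ a in (0 : ℝ)..π / 2, ∑ n ∈ Finset.range M, (-1) ^ n * cos a ^ n * wallisIntegral n := by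
    rw [intervalIntegral.integral_finsetSum fun n _ ↦
      Continuous.intervalIntegrable (by fun_prop) _ _]
    refine Finset.sum_congr rfl fun n _ ↦ ?_
    rw [intervalIntegral.integral_mul_const, intervalIntegral.integral_const_mul, sq, mul_assoc]
    rfl
  have hsq : wallisIntegral M ^ 2 = ∫ a in (0 : ℝ)..π / 2, cos a ^ M * wallisIntegral M := by
    rw [intervalIntegral.integral_mul_const, sq]
    rfl
  rw [hsum, ← intervalIntegral.integral_sub continuousOn_inv_sinc.intervalIntegrable
    (Continuous.intervalIntegrable (by fun_prop) _ _), hsq, ← norm_eq_abs]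
  exact intervalIntegral.norm_integral_le_of_norm_le (by positivity)
    (ae_of_all _ fun a ha ↦ abs_inv_sinc_sub_sum_le ha.1 ha.2 M)
    (Continuous.intervalIntegrable (by fun_prop) _ _)

theorem seriesGap_zero_eq_integral :
    seriesGap 0 = 4 / π * ∫ a in (0 : ℝ)..π / 2, (sinc a)⁻¹ := by
  have hsum := (interlacing_wzTerm_dualTerm le_rfl (by norm_num)).summable_sub.hasSum
  refine tendsto_nhds_unique hsum.tendsto_sum_nat (tendsto_iff_norm_sub_tendsto_zero.2
    (squeeze_zero (fun _ ↦ norm_nonneg _) (fun N ↦ ?_) tendsto_wzTerm_zero))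
  rw [sum_wzTerm_sub_dualTerm_zero, ← mul_sub, norm_mul, norm_of_nonneg (by positivity),
    wzTerm_zero_eq_wallisIntegral, norm_sub_rev]
  gcongr
  exact abs_integral_inv_sinc_sub_sum_le (2 * N)

theorem integral_mul_sin_odd (n : ℕ) :
    ∫ a in (0 : ℝ)..π / 2, a * sin ((2 * n + 1) * a) = (-1) ^ n / (2 * n + 1) ^ 2 := by
  have hn : (2 * n + 1 : ℝ) ≠ 0 := by positivity
  have hderiv (t : ℝ) : HasDerivAt (fun t : ℝ ↦ sin ((2 * n + 1) * t) / (2 * n + 1) ^ 2 -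
      t * cos ((2 * n + 1) * t) / (2 * n + 1)) (t * sin ((2 * n + 1) * t)) t := by
    have hlin := (hasDerivAt_id t).const_mul (2 * n + 1 : ℝ)
    refine ((hlin.sin.div_const _).sub
      (((hasDerivAt_id t).mul hlin.cos).div_const _)).congr_deriv ?_
    simp only [id]
    field_simp
    ring
  rw [intervalIntegral.integral_eq_sub_of_hasDerivAt (fun t _ ↦ hderiv t)
    (Continuous.intervalIntegrable (by fun_prop) _ _),
    show (2 * n + 1) * (π / 2) = π / 2 + n * π by ring, sin_add_nat_mul_pi, cos_add_nat_mul_pi]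
  simp

theorem sum_sin_odd_mul_sin (a : ℝ) (N : ℕ) :
    2 * (∑ n ∈ Finset.range N, sin ((2 * n + 1) * a)) * sin a = 1 - cos (2 * N * a) := by
  induction N with
  | zero => simp
  | succ N ih =>
    rw [Finset.sum_range_succ, mul_add, add_mul, ih, Nat.cast_succ,
      show 2 * ((N : ℝ) + 1) * a = (2 * N + 1) * a + a by ring, cos_add,
      show 2 * (N : ℝ) * a = (2 * N + 1) * a - a by ring, cos_sub]
    ring

theorem tendsto_integral_mul_cos_atTop {f : ℝ → ℝ} {a b : ℝ}
    (hf : IntervalIntegrable f volume a b) :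
    Tendsto (fun w ↦ ∫ t in a..b, f t * cos (w * t)) atTop (𝓝 0) := by
  wlog hab : a ≤ b generalizing a b
  · simp_rw [intervalIntegral.integral_symm b a]
    simpa using (this hf.symm (le_of_not_ge hab)).neg
  rw [intervalIntegrable_iff_integrableOn_Ioc_of_le hab] at hf
  have hw : Tendsto (fun w : ℝ ↦ w / (2 * π)) atTop (cocompact ℝ) :=
    (tendsto_id.atTop_div_const two_pi_pos).mono_right atTop_le_cocompact
  have hlim := (Complex.continuous_re.tendsto 0).comp ((Real.tendsto_integral_exp_smul_cocompact
    ((Ioc a b).indicator fun t ↦ (f t : ℂ))).comp hw)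
  refine hlim.congr fun w ↦ ?_
  have hexp (t : ℝ) : fourierChar (-(t * (w / (2 * π)))) • (Ioc a b).indicator (fun t ↦ (f t : ℂ)) t
      = (Ioc a b).indicator (fun t ↦ Complex.exp ((-(w * t) : ℝ) * Complex.I) * f t) t := by
    by_cases ht : t ∈ Ioc a b
    · rw [indicator_of_mem ht, indicator_of_mem ht, Circle.smul_def, fourierChar_apply, smul_eq_mul]
      congr 4
      field_simp
    · rw [indicator_of_notMem ht, indicator_of_notMem ht, smul_zero]
  have hint : IntegrableOn (fun t ↦ Complex.exp ((-(w * t) : ℝ) * Complex.I) * f t) (Ioc a b) :=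
    Integrable.bdd_mul (c := 1) hf.ofReal (Continuous.aestronglyMeasurable (by fun_prop))
      (ae_of_all _ fun t ↦ (Complex.norm_exp_ofReal_mul_I _).le)
  simp only [Function.comp_apply, hexp]
  rw [integral_indicator measurableSet_Ioc, intervalIntegral.integral_of_le hab]
  refine (integral_re hint).symm.trans (integral_congr_ae (ae_of_all _ fun t ↦ ?_))
  simp only [RCLike.re_to_complex]
  rw [Complex.re_mul_ofReal, Complex.exp_ofReal_mul_I_re, cos_neg, mul_comm]

theorem sum_catalan_eq_integral (N : ℕ) :
    ∑ n ∈ Finset.range N, (-1 : ℝ) ^ n / (2 * n + 1) ^ 2 =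
      ((∫ a in (0 : ℝ)..π / 2, (sinc a)⁻¹) -
        ∫ a in (0 : ℝ)..π / 2, (sinc a)⁻¹ * cos (2 * N * a)) / 2 := by
  have hinteg := continuousOn_inv_sinc.intervalIntegrable (μ := volume)
  rw [← intervalIntegral.integral_sub hinteg (hinteg.mul_continuousOn (by fun_prop)),
    ← intervalIntegral.integral_div]
  simp only [← integral_mul_sin_odd]
  rw [← intervalIntegral.integral_finsetSum fun n _ ↦
    Continuous.intervalIntegrable (by fun_prop) _ _]
  refine intervalIntegral.integral_congr_ae (ae_of_all _ fun a ha ↦ ?_)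
  rw [uIoc_of_le (by positivity)] at ha
  have hsin := sin_pos_of_pos_of_lt_pi ha.1 (by linarith [ha.2, pi_pos])
  rw [← Finset.mul_sum, sinc_of_ne_zero ha.1.ne', inv_div, ← mul_one_sub,
    ← sum_sin_odd_mul_sin a N]
  field_simp

theorem catalan'_eq_integral : catalan' = (∫ a in (0 : ℝ)..π / 2, (sinc a)⁻¹) / 2 := by
  have hsummable : Summable fun n : ℕ ↦ (-1 : ℝ) ^ n / (2 * n + 1) ^ 2 := by
    refine .of_norm_bounded ((summable_nat_add_iff 1).2
      (summable_one_div_nat_pow.2 one_lt_two)) fun n ↦ ?_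
    rw [norm_div, norm_pow, norm_neg, norm_one, one_pow, norm_of_nonneg (by positivity)]
    push_cast
    gcongr
    linarith [n.cast_nonneg (α := ℝ)]
  have hosc := (tendsto_integral_mul_cos_atTop continuousOn_inv_sinc.intervalIntegrable).comp
    (tendsto_natCast_atTop_atTop.const_mul_atTop two_pos)
  refine tendsto_nhds_unique hsummable.hasSum.tendsto_sum_nat ?_
  simpa only [sum_catalan_eq_integral, sub_zero, Function.comp_apply]
    using (hosc.const_sub _).div_const 2

theorem seriesGap_zero : seriesGap 0 = 8 / π * catalan' := by
  rw [seriesGap_zero_eq_integral, catalan'_eq_integral]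
  ring

/-! ### Analyticity in the shift -/

theorem analyticAt_Gamma {s : ℝ} (hs : 0 < s) : AnalyticAt ℝ Gamma s := by
  have hdiff : DifferentiableOn ℂ Complex.Gamma {z | 0 < z.re} := fun z hz ↦
    (Complex.differentiableAt_Gamma z fun m h ↦ by
      simp only [h, mem_ofPred_eq, Complex.neg_re, Complex.natCast_re] at hz
      linarith [m.cast_nonneg (α := ℝ)]).differentiableWithinAt
  have hopen : IsOpen {z : ℂ | 0 < z.re} := isOpen_lt continuous_const Complex.continuous_re
  have hs' : {z : ℂ | 0 < z.re} ∈ 𝓝 (s : ℂ) := hopen.mem_nhds hs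
  exact (hdiff.analyticAt hs').re_ofReal

theorem analyticAt_pochG {a t : ℝ} (h : 0 < a + t) : AnalyticAt ℝ (pochG a) t :=
  ((analyticAt_Gamma h).comp (analyticAt_const.add analyticAt_id)).div_const

theorem analyticAt_hypWeight {t : ℝ} (ht : -(1 / 4) < t) : AnalyticAt ℝ hypWeight t := by
  have hpow : AnalyticAt ℝ (fun t : ℝ ↦ (2 : ℝ) ^ (-(2 : ℝ) * t)) t := by
    simp only [rpow_def_of_pos two_pos]
    fun_prop
  refine hpow.mul ((((analyticAt_pochG (by linarith)).mul (analyticAt_pochG (by linarith))).mul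
    (analyticAt_pochG (by linarith))).div ((analyticAt_pochG (by linarith)).pow 3) ?_)
  exact pow_ne_zero 3 (pochG_pos one_pos (by linarith)).ne'

theorem hypWeight_add_one {t : ℝ} (ht : -(1 / 4) < t) :
    hypWeight (t + 1) =
      hypWeight t * (1 / 4 * ((t + 1 / 2) * (t + 1 / 4) * (t + 3 / 4) / (t + 1) ^ 3)) := by
  have hpow : (2 : ℝ) ^ (-(2 : ℝ) * (t + 1)) = (2 : ℝ) ^ (-(2 : ℝ) * t) * (1 / 4) := by
    rw [mul_add, rpow_add two_pos]
    norm_num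
  rw [hypWeight, hypWeight, hpow, pochG_add_one (by linarith), pochG_add_one (by linarith),
    pochG_add_one (by linarith), pochG_add_one (by linarith), mul_pow]
  simp only [div_eq_mul_inv, mul_inv]
  ring

/-- The ratio of consecutive terms of `(-1)^n hypWeight (n + z)`, continued to complex `z`. -/
noncomputable def weightRatio (z : ℂ) : ℂ :=
  -(1 / 4) * ((z + 1 / 2) * (z + 1 / 4) * (z + 3 / 4) / (z + 1) ^ 3)

/-- The `n`-th term of the series divided by `hypWeight z`, which makes it a rational function of
the complex variable `z`. -/
noncomputable def weightSeries (z : ℂ) (n : ℕ) : ℂ :=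
  (∏ i ∈ Finset.range n, weightRatio (i + z)) * (20 * (n + z) + 3)

theorem ofReal_alternating_hypWeight {x : ℝ} (hx : -(1 / 4) < x) (n : ℕ) :
    (((-1) ^ n * hypWeight (n + x) : ℝ) : ℂ) =
      hypWeight x * ∏ i ∈ Finset.range n, weightRatio (i + x) := by
  induction n with
  | zero => simp
  | succ n ih =>
    rw [Finset.prod_range_succ, ← mul_assoc, ← ih, Nat.cast_succ, add_right_comm,
      hypWeight_add_one (by linarith [n.cast_nonneg (α := ℝ)]), weightRatio]
    push_cast
    ring

theorem norm_add_ofReal_le_norm_add_ofReal {z : ℂ} {a b : ℝ} (hab : a ≤ b)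
    (h : 0 ≤ 2 * z.re + a + b) : ‖z + a‖ ≤ ‖z + b‖ := by
  rw [Complex.norm_def, Complex.norm_def]
  refine sqrt_le_sqrt ?_
  simp only [Complex.normSq_apply, Complex.add_re, Complex.add_im, Complex.ofReal_re,
    Complex.ofReal_im]
  nlinarith [mul_nonneg (sub_nonneg.2 hab) h]

theorem neg_lt_re_natCast_add {z : ℂ} {r : ℝ} (hz : ‖z‖ < r) (n : ℕ) : -r < (n + z : ℂ).re := by
  rw [Complex.add_re, Complex.natCast_re]
  linarith [n.cast_nonneg (α := ℝ), (abs_le.1 (Complex.abs_re_le_norm z)).1]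

theorem add_one_ne_zero_of_lt_re {z : ℂ} (hz : -1 < z.re) : z + 1 ≠ 0 := by
  intro h
  have := congrArg Complex.re h
  rw [Complex.add_re, Complex.one_re, Complex.zero_re] at this
  linarith

theorem norm_weightRatio_le {z : ℂ} (hz : -(1 / 4) < z.re) : ‖weightRatio z‖ ≤ 1 / 4 := by
  have hle {a : ℝ} (ha : 1 / 4 ≤ a) (ha' : a ≤ 1) : ‖z + a‖ ≤ ‖z + 1‖ := by
    simpa using norm_add_ofReal_le_norm_add_ofReal (z := z) ha' (by linarith)
  have hpos : 0 < ‖z + 1‖ := norm_pos_iff.2 (add_one_ne_zero_of_lt_re (by linarith))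
  have hhalf := hle (a := 1 / 2) (by norm_num) (by norm_num)
  have hquarter := hle (a := 1 / 4) (by norm_num) (by norm_num)
  have hthree := hle (a := 3 / 4) (by norm_num) (by norm_num)
  push_cast at hhalf hquarter hthree
  rw [weightRatio, norm_mul, norm_div, norm_mul, norm_mul, norm_pow, norm_neg,
    show ‖(1 / 4 : ℂ)‖ = 1 / 4 by norm_num]
  refine mul_le_of_le_one_right (by norm_num) ((div_le_one (by positivity)).2 ?_)
  calc _ ≤ ‖z + 1‖ * ‖z + 1‖ * ‖z + 1‖ := by gcongr
    _ = ‖z + 1‖ ^ 3 := by ring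

theorem norm_weightSeries_le {z : ℂ} (hz : ‖z‖ < 1 / 4) (n : ℕ) :
    ‖weightSeries z n‖ ≤ (20 * n + 23) * (1 / 4) ^ n := by
  have hprod : ‖∏ i ∈ Finset.range n, weightRatio (i + z)‖ ≤ (1 / 4) ^ n := by
    rw [norm_prod]
    simpa using Finset.prod_le_prod (s := Finset.range n) (fun i _ ↦ norm_nonneg _)
      fun i _ ↦ norm_weightRatio_le (neg_lt_re_natCast_add hz i)
  have hlin : ‖(20 * (n + z) + 3 : ℂ)‖ ≤ 20 * n + 23 :=
    calc ‖(20 * (n + z) + 3 : ℂ)‖ ≤ ‖(20 : ℂ)‖ * (‖(n : ℂ)‖ + ‖z‖) + ‖(3 : ℂ)‖ := by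
          refine (norm_add_le _ _).trans ?_
          rw [norm_mul]
          gcongr
          exact norm_add_le _ _
      _ ≤ 20 * n + 23 := by
        rw [Complex.norm_natCast]
        norm_num
        linarith
  rw [weightSeries, norm_mul, mul_comm]
  gcongr

theorem summable_weightSeries_bound : Summable fun n : ℕ ↦ (20 * (n : ℝ) + 23) * (1 / 4) ^ n := by
  have hr : ‖(1 / 4 : ℝ)‖ < 1 := by norm_num
  refine (((summable_pow_mul_geometric_of_norm_lt_one 1 hr).mul_left 20).add
    ((summable_geometric_of_norm_lt_one hr).mul_left 23)).congr fun n ↦ ?_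
  ring

theorem analyticAt_tsum_weightSeries :
    AnalyticAt ℂ (fun z ↦ ∑' n, weightSeries z n) 0 := by
  refine DifferentiableOn.analyticAt (Complex.differentiableOn_tsum_of_summable_norm
    summable_weightSeries_bound (fun n ↦ ?_) Metric.isOpen_ball fun n z hz ↦
      norm_weightSeries_le (mem_ball_zero_iff.1 hz) n) (Metric.ball_mem_nhds 0 (by norm_num))
  refine DifferentiableOn.mul (DifferentiableOn.fun_finsetProd fun i _ ↦ ?_) (by fun_prop)
  refine DifferentiableOn.const_mul (DifferentiableOn.div (by fun_prop) (by fun_prop) ?_) _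
  intro z hz
  have := neg_lt_re_natCast_add (mem_ball_zero_iff.1 hz) i
  exact pow_ne_zero 3 (add_one_ne_zero_of_lt_re (by linarith))

theorem hasSum_shiftedSeries {x : ℝ} (hx : |x| < 1 / 4) :
    HasSum (fun n : ℕ ↦ (-1) ^ n * (hypWeight (n + x) * (20 * (n + x) + 3)))
      (hypWeight x * (∑' n, weightSeries x n).re) := by
  have hx' : ‖(x : ℂ)‖ < 1 / 4 := by rwa [Complex.norm_real]
  have hsum := Complex.reCLM.hasSum ((Summable.of_norm_bounded summable_weightSeries_bound
    (norm_weightSeries_le hx')).hasSum.mul_left (hypWeight x : ℂ))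
  rw [Complex.reCLM_apply, Complex.re_ofReal_mul] at hsum
  refine hsum.congr_fun fun n ↦ ?_
  rw [weightSeries, ← mul_assoc (hypWeight x : ℂ),
    ← ofReal_alternating_hypWeight (by linarith [(abs_lt.1 hx).1]), Complex.reCLM_apply,
    Complex.re_ofReal_mul]
  simp [mul_assoc]

theorem analyticAt_shiftedSeries : AnalyticAt ℝ shiftedSeries 0 := by
  refine AnalyticAt.congr (analyticAt_const.mul ((analyticAt_hypWeight (by norm_num)).mul
    analyticAt_tsum_weightSeries.re_ofReal) : AnalyticAt ℝ
      (fun x ↦ 1 / 8 * (hypWeight x * (∑' n, weightSeries x n).re)) 0) ?_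
  filter_upwards [Metric.ball_mem_nhds (0 : ℝ) (show (0 : ℝ) < 1 / 4 by norm_num)] with x hx
  rw [Pi.mul_apply, shiftedSeries, (hasSum_shiftedSeries (mem_ball_zero_iff.1 hx)).tsum_eq]

/-! ### The expansion at `0` -/

/-- The trigonometric factor that turns `wzSum x` into `1 / π` up to a term of order `x ^ 3`. -/
noncomputable def trigFactor (x : ℝ) : ℝ :=
  (1 + 2 * sin (π * x) ^ 2) * cos (π * x)

theorem trigFactor_eq (x : ℝ) :
    trigFactor x = 3 / 2 * cos (π * x) - 1 / 2 * cos (3 * π * x) := by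
  rw [trigFactor, mul_assoc 3, cos_three_mul, sin_sq]
  ring

theorem cos_mul_sub_isBigO (c : ℝ) :
    (fun x ↦ cos (c * x) - (1 - (c * x) ^ 2 / 2)) =O[𝓝 0] fun x ↦ x ^ 4 := by
  have hsmall : ∀ᶠ x : ℝ in 𝓝 0, |c * x| ≤ 1 := by
    have : Tendsto (fun x : ℝ ↦ |c * x|) (𝓝 0) (𝓝 0) :=
      (Continuous.tendsto' (by fun_prop) 0 0 (by simp))
    exact this.eventually_le_const one_pos
  refine IsBigO.of_bound (|c| ^ 4 * (5 / 96)) (hsmall.mono fun x hx ↦ ?_)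
  rw [norm_eq_abs, norm_eq_abs, abs_pow, mul_right_comm, ← mul_pow, ← abs_mul]
  exact cos_bound hx

theorem trigFactor_sub_isBigO :
    (fun x ↦ trigFactor x - (1 + 3 / 2 * π ^ 2 * x ^ 2)) =O[𝓝 0] fun x ↦ x ^ 4 := by
  refine (((cos_mul_sub_isBigO π).const_mul_left (3 / 2)).sub
    ((cos_mul_sub_isBigO (3 * π)).const_mul_left (1 / 2))).congr_left fun x ↦ ?_
  rw [trigFactor_eq]
  ring

/-- The quotient `(wzSum x * trigFactor x - 1 / π) / x ^ 3`, in a form that is continuous at `0`. -/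
noncomputable def cubicFactor (x : ℝ) : ℝ :=
  4 * π ^ 2 * wzFactor x * sinc (π * x) ^ 2 * cos (π * x) * seriesGap x

theorem wzSum_mul_trigFactor {x : ℝ} (hx : 0 < x) (hx' : x < 1 / 2) :
    wzSum x * trigFactor x = 1 / π + x ^ 3 * cubicFactor x := by
  have hdual : Summable (dualTerm x) :=
    summable_gammaQuotient (by linarith) (by linarith) (by norm_num) (by linarith) (by linarith)
  have hgap : seriesGap x = ∑' k, wzTerm x k - ∑' k, dualTerm x k :=
    (summable_wzTerm hx).tsum_sub hdual
  have hsin : sin (π * x) = π * x * sinc (π * x) := by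
    have : π * x ≠ 0 := by positivity
    rw [sinc_of_ne_zero this, mul_div_cancel₀ _ this]
  rw [cubicFactor, ← wzFactor_mul_tsum_add hx hx', hgap, wzSum, trigFactor, hsin]
  ring

theorem continuousAt_wzFactor_zero : ContinuousAt wzFactor 0 := by
  have htwo {a : ℝ} (ha : 0 < a) : ContinuousAt (fun x ↦ pochG a (2 * x)) 0 :=
    ContinuousAt.comp (analyticAt_pochG (by simpa using ha)).continuousAt (by fun_prop)
  refine ((htwo one_half_pos).mul ((analyticAt_pochG (by norm_num)).continuousAt.pow 2)).div
    (continuousAt_const.mul (htwo one_pos)) ?_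
  simp [pochG_zero, pi_ne_zero]

theorem tendsto_cubicFactor : Tendsto cubicFactor (𝓝[>] 0) (𝓝 (32 * catalan')) := by
  have hfactor : ContinuousAt
      (fun x ↦ 4 * π ^ 2 * wzFactor x * sinc (π * x) ^ 2 * cos (π * x)) 0 := by
    have := continuousAt_wzFactor_zero
    have := continuous_sinc
    fun_prop
  have hlim := (hfactor.tendsto.mono_left nhdsWithin_le_nhds).mul tendsto_seriesGap
  convert! hlim using 2
  rw [wzFactor_zero, seriesGap_zero, mul_zero, sinc_zero, cos_zero]
  field_simp [pi_ne_zero]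
  ring

theorem shiftedSeries_mul_trigFactor_isLittleO :
    (fun x ↦ shiftedSeries x * trigFactor x - 1 / π - 32 * catalan' * x ^ 3)
      =o[𝓝[>] 0] fun x ↦ x ^ 3 := by
  have hlim : (fun x ↦ cubicFactor x - 32 * catalan') =o[𝓝[>] 0] fun _ ↦ (1 : ℝ) :=
    (isLittleO_one_iff ℝ).2 (tendsto_sub_nhds_zero_iff.2 tendsto_cubicFactor)
  refine (hlim.mul_isBigO (isBigO_refl (fun x : ℝ ↦ x ^ 3) _)).congr' ?_ (by simp)
  filter_upwards [Ioo_mem_nhdsGT (show (0 : ℝ) < 1 / 4 by norm_num)] with x ⟨hx, hx'⟩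
  rw [shiftedSeries_eq_wzSum hx (hasSum_shiftedSeries (abs_lt.2 ⟨by linarith, hx'⟩)).summable,
    wzSum_mul_trigFactor hx (by linarith)]
  ring

theorem isBigO_sub_pow_succ_of_isLittleO {𝕜 E : Type*} [NontriviallyNormedField 𝕜]
    [NormedAddCommGroup E] [NormedSpace 𝕜 E] {f : 𝕜 → E} {z₀ : 𝕜} {l : Filter 𝕜} [l.NeBot]
    (hl : l ≤ 𝓝[≠] z₀) (hf : AnalyticAt 𝕜 f z₀) {n : ℕ} (h : f =o[l] fun z ↦ (z - z₀) ^ n) :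
    f =O[𝓝 z₀] fun z ↦ (z - z₀) ^ (n + 1) := by
  have hl' : l ≤ 𝓝 z₀ := hl.trans nhdsWithin_le_nhds
  have horder : ((n + 1 : ℕ) : ℕ∞) ≤ analyticOrderAt f z₀ := by
    by_contra! hlt
    obtain ⟨m, hm⟩ := ENat.ne_top_iff_exists.1 (hlt.trans_le le_top).ne
    obtain ⟨g, hg, hg₀, hfg⟩ := hf.analyticOrderAt_eq_natCast.1 hm.symm
    have hmn : m ≤ n := by
      rw [← hm] at hlt
      exact Nat.lt_succ_iff.1 (by exact_mod_cast hlt)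
    have hpow : (fun z ↦ (z - z₀) ^ n) =O[𝓝 z₀] fun z ↦ (z - z₀) ^ m := by
      refine IsBigO.of_bound 1 ?_
      filter_upwards [Metric.closedBall_mem_nhds z₀ one_pos] with z hz
      rw [norm_pow, norm_pow, one_mul]
      exact pow_le_pow_of_le_one (norm_nonneg _) (mem_closedBall_iff_norm.1 hz) hmn
    have hlower : (fun z ↦ (z - z₀) ^ m) =O[𝓝 z₀] f := by
      have hone : (fun _ ↦ (1 : 𝕜)) =O[𝓝 z₀] g :=
        (isBigO_const_left_iff_pos_le_norm one_ne_zero).2 ⟨‖g z₀‖ / 2, by positivity,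
          hg.continuousAt.norm.eventually_const_le (half_lt_self (norm_pos_iff.2 hg₀))⟩
      refine ((isBigO_refl (fun z ↦ (z - z₀) ^ m) _).smul hone).congr' (by simp) ?_
      exact hfg.mono fun _ h ↦ h.symm
    have hirrefl := (hlower.mono hl').trans_isLittleO (h.trans_isBigO (hpow.mono hl'))
    refine isLittleO_irrefl (Eventually.frequently (hl ?_)) hirrefl
    filter_upwards [self_mem_nhdsWithin] with z hz
    exact pow_ne_zero m (sub_ne_zero.2 hz)
  obtain ⟨g, hg, hfg⟩ := (natCast_le_analyticOrderAt hf).1 horder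
  refine IsBigO.congr' ((isBigO_refl (fun z ↦ (z - z₀) ^ (n + 1)) _).smul
    (hg.continuousAt.tendsto.isBigO_one 𝕜)) (hfg.mono fun _ h ↦ h.symm) (by simp)

theorem analyticAt_trigFactor (x : ℝ) : AnalyticAt ℝ trigFactor x := by
  unfold trigFactor
  fun_prop

theorem shiftedSeries_mul_trigFactor_isBigO :
    (fun x ↦ shiftedSeries x * trigFactor x - 1 / π - 32 * catalan' * x ^ 3)
      =O[𝓝 0] fun x ↦ x ^ 4 := by
  have hanalytic : AnalyticAt ℝ
      (fun x ↦ shiftedSeries x * trigFactor x - 1 / π - 32 * catalan' * x ^ 3) 0 :=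
    ((analyticAt_shiftedSeries.mul (analyticAt_trigFactor 0)).sub analyticAt_const).sub
      (by fun_prop)
  have hright : 𝓝[>] (0 : ℝ) ≤ 𝓝[≠] 0 := nhdsWithin_mono _ fun _ hx ↦ hx.ne'
  simpa using isBigO_sub_pow_succ_of_isLittleO hright hanalytic (n := 3)
    (by simpa using shiftedSeries_mul_trigFactor_isLittleO)

theorem expansion_mul_trigFactor_isBigO :
    (fun x ↦ (1 / π - 3 / 2 * π * x ^ 2 + 32 * catalan' * x ^ 3) * trigFactor x
        - 1 / π - 32 * catalan' * x ^ 3) =O[𝓝 0] fun x ↦ x ^ 4 := by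
  have hcont (f : ℝ → ℝ) (hf : Continuous f) : f =O[𝓝 0] fun _ ↦ (1 : ℝ) :=
    hf.continuousAt.tendsto.isBigO_one ℝ
  have hmain := (hcont (fun x ↦ 1 / π - 3 / 2 * π * x ^ 2 + 32 * catalan' * x ^ 3)
    (by fun_prop)).mul trigFactor_sub_isBigO
  have htail := (hcont (fun x ↦ -(9 / 4 * π ^ 3) + 48 * catalan' * π ^ 2 * x)
    (by fun_prop)).mul (isBigO_refl (fun x : ℝ ↦ x ^ 4) (𝓝 0))
  refine (hmain.add htail).congr (fun x ↦ ?_) fun x ↦ one_mul _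
  field_simp
  ring

theorem shiftedSeries_sub_expansion_isBigO :
    (fun x ↦ shiftedSeries x - (1 / π - 3 / 2 * π * x ^ 2 + 32 * catalan' * x ^ 3))
      =O[𝓝 0] fun x ↦ x ^ 4 := by
  have hcont : ContinuousAt trigFactor 0 := (analyticAt_trigFactor 0).continuousAt
  have hne : trigFactor 0 ≠ 0 := by simp [trigFactor]
  have hmul := ((hcont.inv₀ hne).tendsto.isBigO_one ℝ).mul
    (shiftedSeries_mul_trigFactor_isBigO.sub expansion_mul_trigFactor_isBigO)
  refine hmul.congr' ?_ (by simp)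
  filter_upwards [hcont.eventually_ne hne] with x hx
  rw [Pi.inv_apply]
  field_simp
  ring

end

/-- As `x → 0`,
`(1/8) ∑_{n≥0} (-1)^n 2^{-2(n+x)} (1/2)_{n+x}(1/4)_{n+x}(3/4)_{n+x}/(1)_{n+x}³ (20(n+x)+3)
 = 1/π - (3/2)π x² + 32 G x³ + O(x⁴)`. -/
theorem identity3_expansion :
    (fun x : ℝ =>
      (1/8 : ℝ) * (∑' n : ℕ,
          (-1 : ℝ) ^ n * (2 : ℝ) ^ (-(2 : ℝ) * ((n : ℝ) + x)) *
            (pochG (1/2) ((n : ℝ) + x) * pochG (1/4) ((n : ℝ) + x) *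
              pochG (3/4) ((n : ℝ) + x) / pochG 1 ((n : ℝ) + x) ^ 3) *
            (20 * ((n : ℝ) + x) + 3))
        - (1 / Real.pi - (3/2) * Real.pi * x ^ 2 + 32 * catalan' * x ^ 3))
      =O[nhds 0] (fun x : ℝ => x ^ 4) := by
  refine shiftedSeries_sub_expansion_isBigO.congr_left fun x ↦ ?_
  simp only [shiftedSeries, hypWeight, mul_assoc]
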